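/- arXiv:2205.01487 — 2 statements merged into one kernel-verified Lean document; each statement's English description precedes it below -/
import Mathlib

section
/- Assume ∫⟨y⟩²|V(y)|dy < ∞ and that V is non-generic, i.e. ∫_ℝ V(y) m₊(y,0) dy = 0. Then the limit a := lim_{x→−∞} m₊(x,0) exists, is real and nonzero, and the transmission and reflection coefficients satisfy lim_{k→0} T(k) = 2a/(1+a²), lim_{k→0} R₊(k) = (1−a²)/(1+a²), and lim_{k→0} R₋(k) = (a²−1)/(1+a²). -/
open MeasureTheory Filter Topology Set

noncomputable def jap (x : ℝ) : ℝ := Real.sqrt (1 + x ^ 2)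

/-- The kernel `D_k(z) = (e^{2ikz} - 1)/(2ik)` for `k ≠ 0`, and `D_0(z) = z`. -/
noncomputable def Dker (k z : ℝ) : ℂ :=
  if k = 0 then (z : ℂ)
  else (Complex.exp (2 * Complex.I * (k : ℂ) * (z : ℂ)) - 1) / (2 * Complex.I * (k : ℂ))

/-- `m` is, for each `k`, the unique bounded solution of the Volterra equation
`m₊(x,k) = 1 + ∫_x^∞ D_k(y−x) V(y) m₊(y,k) dy`. -/
def IsJostPlus (V : ℝ → ℝ) (m : ℝ → ℝ → ℂ) : Prop :=
  ∀ k : ℝ, (∃ C : ℝ, ∀ x : ℝ, ‖m x k‖ ≤ C) ∧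
    ∀ x : ℝ, m x k = 1 + ∫ y in Set.Ioi x, Dker k (y - x) * (V y : ℂ) * m y k

/-- `m` is, for each `k`, the unique bounded solution of the Volterra equation
`m₋(x,k) = 1 + ∫_{−∞}^x D_k(x−y) V(y) m₋(y,k) dy`. -/
def IsJostMinus (V : ℝ → ℝ) (m : ℝ → ℝ → ℂ) : Prop :=
  ∀ k : ℝ, (∃ C : ℝ, ∀ x : ℝ, ‖m x k‖ ≤ C) ∧
    ∀ x : ℝ, m x k = 1 + ∫ y in Set.Iic x, Dker k (x - y) * (V y : ℂ) * m y k

/-- `1/T(k) = 1 − (2ik)⁻¹ ∫ V(y) m₊(y,k) dy`. -/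
noncomputable def Tinv (V : ℝ → ℝ) (mp : ℝ → ℝ → ℂ) (k : ℝ) : ℂ :=
  1 - (2 * Complex.I * (k : ℂ))⁻¹ * ∫ y : ℝ, (V y : ℂ) * mp y k

/-- The transmission coefficient `T(k)`. -/
noncomputable def Tcoef (V : ℝ → ℝ) (mp : ℝ → ℝ → ℂ) (k : ℝ) : ℂ :=
  (Tinv V mp k)⁻¹

/-- The reflection coefficient `R₊(k) = T(k)·(2ik)⁻¹ ∫ e^{−2iky} V(y) m₋(y,k) dy`. -/
noncomputable def Rp (V : ℝ → ℝ) (mp mm : ℝ → ℝ → ℂ) (k : ℝ) : ℂ :=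
  Tcoef V mp k * ((2 * Complex.I * (k : ℂ))⁻¹ *
    ∫ y : ℝ, Complex.exp (-2 * Complex.I * (k : ℂ) * (y : ℂ)) * (V y : ℂ) * mm y k)

/-- The reflection coefficient `R₋(k) = T(k)·(2ik)⁻¹ ∫ e^{2iky} V(y) m₊(y,k) dy`. -/
noncomputable def Rm (V : ℝ → ℝ) (mp mm : ℝ → ℝ → ℂ) (k : ℝ) : ℂ :=
  Tcoef V mp k * ((2 * Complex.I * (k : ℂ))⁻¹ *
    ∫ y : ℝ, Complex.exp (2 * Complex.I * (k : ℂ) * (y : ℂ)) * (V y : ℂ) * mp y k)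

/-! Write `g_k = V m₊(·,k)`. In the non-generic case `∫ g_0 = 0`, so `m₊(·,0)` also solves a
Volterra equation from `-∞`, with inhomogeneous term `a = 1 + ∫ y g_0`. Hence it tends to `a` there,
`a ≠ 0` by uniqueness, and `a` is real because complex conjugation preserves the equation.

Let `E_k` be the antiderivative of `D_k`, so that `D_k(z) = z + 2ik E_k(z)`. Expanding either factor
of `∫ V m₊(·,k) m₊(·,0)` by its Volterra equation gives
`a ∫ g_k = 2ik ∬_{x>y} E_k(x - y) g_k(x) g_0(y)`.
As `k → 0`, dominated convergence turns the double integral into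
`∬_{x>y} (x - y)²/2 g_0(x) g_0(y) = -(∫ y g_0)²/2 = -(a - 1)²/2`, where the second moments of `g_0`
drop out since `∫ g_0 = 0`. So `(2ik)⁻¹ ∫ g_k → -(a - 1)²/(2a)`, which gives the limit of `T`, and
replacing `1` by `e^{2iky} = 1 + 2ik D_k(y)` adds `∫ y g_0 = a - 1`, which gives that of `R₋`. The
reflection `x ↦ -x` exchanges the two Jost solutions and `a` with `a⁻¹`, which gives that of `R₊`.

The dominating functions come from `|m₊(x,k)| ≤ C (1 + x⁻)` uniformly in `k`, obtained by applying
Grönwall's inequality to `m₊(x,k)/(1 + x⁻)`.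
-/

section Kernel

lemma Dker_zero_left (z : ℝ) : Dker 0 z = z := by simp [Dker]

lemma Dker_zero_right (k : ℝ) : Dker k 0 = 0 := by simp [Dker]

lemma two_I_mul_ne_zero {k : ℝ} (hk : k ≠ 0) : 2 * Complex.I * (k : ℂ) ≠ 0 := by simp [hk]

lemma two_I_mul_mul_Dker (k z : ℝ) :
    2 * Complex.I * k * Dker k z = Complex.exp (2 * Complex.I * k * z) - 1 := by
  rcases eq_or_ne k 0 with rfl | hk
  · simp
  · rw [Dker, if_neg hk, mul_div_cancel₀ _ (two_I_mul_ne_zero hk)]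

lemma hasDerivAt_Dker (k z : ℝ) :
    HasDerivAt (Dker k) (Complex.exp (2 * Complex.I * k * z)) z := by
  rcases eq_or_ne k 0 with rfl | hk
  · simpa [Dker_zero_left, funext Dker_zero_left] using (hasDerivAt_id z).ofReal_comp
  · have hexp : HasDerivAt (fun z : ℝ => Complex.exp (2 * Complex.I * k * z))
        (Complex.exp (2 * Complex.I * k * z) * (2 * Complex.I * k)) z := by
      simpa using ((hasDerivAt_id z).ofReal_comp.const_mul (2 * Complex.I * (k : ℂ))).cexp
    have hD : Dker k = fun z : ℝ =>
        (Complex.exp (2 * Complex.I * k * z) - 1) / (2 * Complex.I * k) := by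
      ext z
      rw [Dker, if_neg hk]
    rw [hD]
    simpa [hk] using (hexp.sub_const 1).div_const (2 * Complex.I * (k : ℂ))

lemma continuous_Dker (k : ℝ) : Continuous (Dker k) :=
  continuous_iff_continuousAt.mpr fun z => (hasDerivAt_Dker k z).continuousAt

lemma norm_Dker_le (k z : ℝ) : ‖Dker k z‖ ≤ |z| := by
  have hexp (s : ℝ) : ‖Complex.exp (2 * Complex.I * k * s)‖ = 1 := by
    simp [Complex.norm_exp]
  have hcont : Continuous fun s : ℝ => Complex.exp (2 * Complex.I * k * s) := by fun_prop
  have hFTC : ∫ s in (0 : ℝ)..z, Complex.exp (2 * Complex.I * k * s) = Dker k z := by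
    rw [intervalIntegral.integral_eq_sub_of_hasDerivAt (fun s _ => hasDerivAt_Dker k s)
      (hcont.intervalIntegrable 0 z), Dker_zero_right, sub_zero]
  simpa [hFTC] using intervalIntegral.norm_integral_le_of_norm_le_const
    (a := 0) (b := z) fun s _ => (hexp s).le

/-- The antiderivative `E_k(z) = ∫₀ᶻ D_k(s) ds` of the kernel. It is the second-order remainder
`(D_k(z) - z)/(2ik)`, in a form that also makes sense at `k = 0`. -/
noncomputable def Eker (k z : ℝ) : ℂ := ∫ s in (0 : ℝ)..z, Dker k s

lemma Dker_eq_add_Eker (k z : ℝ) : Dker k z = z + 2 * Complex.I * k * Eker k z := by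
  have hint : IntervalIntegrable (fun s => 2 * Complex.I * k * Dker k s) volume 0 z :=
    (continuous_const.mul (continuous_Dker k)).intervalIntegrable _ _
  calc Dker k z = ∫ s in (0 : ℝ)..z, (1 + 2 * Complex.I * k * Dker k s) := by
        rw [intervalIntegral.integral_eq_sub_of_hasDerivAt (f := Dker k)
          (fun s _ => by simpa [two_I_mul_mul_Dker] using hasDerivAt_Dker k s)
          (intervalIntegrable_const.add hint), Dker_zero_right, sub_zero]
    _ = z + 2 * Complex.I * k * Eker k z := by
        rw [intervalIntegral.integral_add intervalIntegrable_const hint,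
          intervalIntegral.integral_const_mul, Eker]
        simp

lemma continuous_Eker (k : ℝ) : Continuous (Eker k) :=
  intervalIntegral.continuous_primitive (fun a b => (continuous_Dker k).intervalIntegrable a b) 0

lemma norm_Eker_le (k z : ℝ) : ‖Eker k z‖ ≤ |z| ^ 2 := by
  have hbound : ∀ s ∈ uIoc 0 z, ‖Dker k s‖ ≤ |z| := fun s hs =>
    (norm_Dker_le k s).trans (by simpa using abs_sub_left_of_mem_uIcc (uIoc_subset_uIcc hs))
  simpa [Eker, sq] using intervalIntegral.norm_integral_le_of_norm_le_const hbound

lemma norm_Dker_sub_le (k z : ℝ) : ‖Dker k z - z‖ ≤ 2 * |k| * |z| ^ 2 := by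
  rw [Dker_eq_add_Eker, add_sub_cancel_left, norm_mul]
  simpa using mul_le_mul_of_nonneg_left (norm_Eker_le k z) (by positivity : 0 ≤ 2 * |k|)

lemma tendsto_Dker (z : ℝ) : Tendsto (fun k => Dker k z) (𝓝 0) (𝓝 (z : ℂ)) := by
  rw [tendsto_iff_norm_sub_tendsto_zero]
  have hlim : Tendsto (fun k : ℝ => 2 * |k| * |z| ^ 2) (𝓝 0) (𝓝 0) :=
    (by fun_prop : Continuous fun k : ℝ => 2 * |k| * |z| ^ 2).tendsto' 0 0 (by simp)
  exact squeeze_zero (fun _ => norm_nonneg _) (fun k => norm_Dker_sub_le k z) hlim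

lemma tendsto_Eker (z : ℝ) : Tendsto (fun k => Eker k z) (𝓝 0) (𝓝 ((z : ℂ) ^ 2 / 2)) := by
  have hlim : ∫ s in (0 : ℝ)..z, (s : ℂ) = (z : ℂ) ^ 2 / 2 := by
    rw [intervalIntegral.integral_ofReal, integral_id]
    simp
  rw [← hlim]
  refine intervalIntegral.tendsto_integral_filter_of_dominated_convergence (fun s => |s|)
    (Eventually.of_forall fun k => (continuous_Dker k).aestronglyMeasurable)
    (Eventually.of_forall fun k => ae_of_all _ fun s _ => norm_Dker_le k s)
    (continuous_abs.intervalIntegrable _ _) (ae_of_all _ fun s _ => tendsto_Dker s)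

lemma countable_Dker_eq_zero (k : ℝ) : {z | Dker k z = 0}.Countable := by
  have hdisc : DiscreteTopology {z | Dker k z = 0} := by
    refine discreteTopology_subtype_iff.mpr fun z _ => ?_
    rw [inf_principal_eq_bot]
    exact (hasDerivAt_Dker k z).eventually_ne (Complex.exp_ne_zero _)
  exact (HereditarilyLindelofSpace.isLindelof _).countable hdisc

end Kernel

section Gronwall

lemma absolutelyContinuousOnInterval_comp_of_lipschitzOnWith {X Y : Type*} [PseudoMetricSpace X]
    [PseudoMetricSpace Y] {g : X → Y} {f : ℝ → X} {a b : ℝ} {K : NNReal} {s : Set X}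
    (hg : LipschitzOnWith K g s) (hf : AbsolutelyContinuousOnInterval f a b)
    (hfs : MapsTo f (uIcc a b) s) : AbsolutelyContinuousOnInterval (fun x => g (f x)) a b := by
  refine squeeze_zero' (Eventually.of_forall fun E => Finset.sum_nonneg fun i _ => dist_nonneg)
    (eventually_inf_principal.mpr <| Eventually.of_forall fun E hE => ?_)
    (by simpa only [mul_zero] using Tendsto.const_mul (K : ℝ) hf)
  rw [Finset.mul_sum]
  exact Finset.sum_le_sum fun i hi =>
    hg.dist_le_mul _ (hfs (hE.1 i hi).1) _ (hfs (hE.1 i hi).2)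

lemma absolutelyContinuousOnInterval_exp_comp {f : ℝ → ℝ} {a b : ℝ}
    (hf : AbsolutelyContinuousOnInterval f a b) :
    AbsolutelyContinuousOnInterval (fun x => Real.exp (f x)) a b := by
  obtain ⟨C, hC⟩ := hf.exists_bound
  obtain ⟨K, hK⟩ := (Real.contDiff_exp (n := 1)).contDiffOn.exists_lipschitzOnWith one_ne_zero
    (convex_Icc (-C) C) isCompact_Icc
  exact absolutelyContinuousOnInterval_comp_of_lipschitzOnWith hK hf fun x hx => abs_le.mp (hC x hx)

lemma le_exp_integral_mul_of_le_sub_integral {w φ : ℝ → ℝ} {a b B : ℝ} (hab : a ≤ b)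
    (hw0 : ∀ x ∈ Icc a b, 0 ≤ w x) (hw : IntervalIntegrable w volume a b)
    (hwφ : IntervalIntegrable (fun x => w x * φ x) volume a b)
    (hφ : ∀ x ∈ Icc a b, φ x ≤ B - ∫ y in a..x, w y * φ y) :
    B ≤ Real.exp (∫ y in a..b, w y) * (B - ∫ y in a..b, w y * φ y) := by
  have hW := hw.absolutelyContinuousOnInterval_intervalIntegral (left_mem_uIcc (b := b))
  have hΨ : AbsolutelyContinuousOnInterval (fun x => B - ∫ y in a..x, w y * φ y) a b :=
    (LipschitzWith.const B).lipschitzOnWith.absolutelyContinuousOnInterval.fun_sub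
      (hwφ.absolutelyContinuousOnInterval_intervalIntegral left_mem_uIcc)
  have hderiv : 0 ≤ᵐ[volume.restrict (Icc a b)] deriv fun x =>
      Real.exp (∫ y in a..x, w y) * (B - ∫ y in a..x, w y * φ y) := by
    rw [EventuallyLE, ae_restrict_iff' measurableSet_Icc]
    filter_upwards [hw.ae_hasDerivAt_integral, hwφ.ae_hasDerivAt_integral] with x hWx hΨx hx
    rw [uIcc_of_le hab] at hWx hΨx
    have ha : a ∈ Icc a b := left_mem_Icc.mpr hab
    rw [((hWx hx a ha).exp.fun_mul ((hΨx hx a ha).const_sub B)).deriv]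
    calc 0 ≤ Real.exp (∫ y in a..x, w y) *
          (w x * ((B - ∫ y in a..x, w y * φ y) - φ x)) :=
          mul_nonneg (Real.exp_pos _).le (mul_nonneg (hw0 x hx) (sub_nonneg.mpr (hφ x hx)))
      _ = _ := by ring
  have hmono := intervalIntegral.integral_nonneg_of_ae_restrict hab hderiv
  rw [((absolutelyContinuousOnInterval_exp_comp hW).fun_mul hΨ).integral_deriv_eq_sub] at hmono
  simpa using hmono

theorem le_mul_exp_integral_Ioi_of_le_add_integral_Ioi {w φ : ℝ → ℝ} {a A : ℝ}
    (hw0 : ∀ x, a ≤ x → 0 ≤ w x) (hw : IntegrableOn w (Ioi a))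
    (hwφ : IntegrableOn (fun x => w x * φ x) (Ioi a))
    (hφ : ∀ x, a ≤ x → φ x ≤ A + ∫ y in Ioi x, w y * φ y) :
    φ a ≤ A * Real.exp (∫ y in Ioi a, w y) := by
  set B := A + ∫ y in Ioi a, w y * φ y
  have hfinite (b : ℝ) (hab : a ≤ b) :
      B ≤ Real.exp (∫ y in a..b, w y) * (B - ∫ y in a..b, w y * φ y) := by
    refine le_exp_integral_mul_of_le_sub_integral hab (fun x hx => hw0 x hx.1)
      ((intervalIntegrable_iff_integrableOn_Ioc_of_le hab).mpr (hw.mono_set Ioc_subset_Ioi_self))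
      ((intervalIntegrable_iff_integrableOn_Ioc_of_le hab).mpr (hwφ.mono_set Ioc_subset_Ioi_self))
      fun x hx => (hφ x hx.1).trans_eq ?_
    rw [← intervalIntegral.integral_Ioi_sub_Ioi hwφ hx.1]
    ring
  have hlim : Tendsto (fun b => Real.exp (∫ y in a..b, w y) * (B - ∫ y in a..b, w y * φ y)) atTop
      (𝓝 (Real.exp (∫ y in Ioi a, w y) * (B - ∫ y in Ioi a, w y * φ y))) :=
    ((Real.continuous_exp.tendsto _).comp
      (intervalIntegral_tendsto_integral_Ioi a hw tendsto_id)).mul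
      (tendsto_const_nhds.sub (intervalIntegral_tendsto_integral_Ioi a hwφ tendsto_id))
  calc φ a ≤ B := hφ a le_rfl
    _ ≤ Real.exp (∫ y in Ioi a, w y) * (B - ∫ y in Ioi a, w y * φ y) :=
        ge_of_tendsto hlim ((eventually_ge_atTop a).mono hfinite)
    _ = A * Real.exp (∫ y in Ioi a, w y) := by rw [add_sub_cancel_right, mul_comm]

end Gronwall

section Moments

/-- `HasMoment n q` says that `q` has a finite absolute moment of order `n`, that is
`∫ (1 + |y|)ⁿ |q(y)| dy < ∞`. The weight `1 + |y|` replaces the equivalent `⟨y⟩` because it is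
submultiplicative under translations. -/
def HasMoment (n : ℕ) (q : ℝ → ℂ) : Prop := Integrable fun y => (1 + |y|) ^ n • q y

lemma abs_sub_le_one_add_abs_mul (y z : ℝ) : |y - z| ≤ (1 + |y|) * (1 + |z|) := by
  nlinarith [abs_sub y z, abs_nonneg y, abs_nonneg z, mul_nonneg (abs_nonneg y) (abs_nonneg z)]

namespace HasMoment

variable {n : ℕ} {q f c : ℝ → ℂ} {B C : ℝ}

lemma aestronglyMeasurable (hq : HasMoment n q) : AEStronglyMeasurable q := by
  have hweight : AEStronglyMeasurable (fun y : ℝ => ((1 + |y|) ^ n)⁻¹) :=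
    (by fun_prop : Measurable fun y : ℝ => ((1 + |y|) ^ n)⁻¹).aestronglyMeasurable
  refine (hweight.smul hq.1).congr (ae_of_all _ fun y => ?_)
  exact inv_smul_smul₀ (by positivity : (1 + |y|) ^ n ≠ 0) (q y)

lemma integrable_weight_mul_norm (hq : HasMoment n q) :
    Integrable fun y => (1 + |y|) ^ n * ‖q y‖ := by
  refine hq.norm.congr (ae_of_all _ fun y => ?_)
  simp only [norm_smul, norm_pow, Real.norm_eq_abs, abs_of_nonneg (by positivity : 0 ≤ 1 + |y|)]

lemma integrable_mul (hq : HasMoment n q) (hc : AEStronglyMeasurable c)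
    (hcB : ∀ y, ‖c y‖ ≤ B * (1 + |y|) ^ n) : Integrable fun y => c y * q y := by
  refine (hq.integrable_weight_mul_norm.const_mul B).mono' (hc.mul hq.aestronglyMeasurable)
    (ae_of_all _ fun y => ?_)
  rw [norm_mul, ← mul_assoc]
  exact mul_le_mul_of_nonneg_right (hcB y) (norm_nonneg _)

lemma integrable (hq : HasMoment n q) : Integrable q := by
  simpa only [one_mul] using hq.integrable_mul (c := fun _ => 1) (B := 1)
    aestronglyMeasurable_const fun y => by
      simpa using one_le_pow₀ (le_add_of_nonneg_right (abs_nonneg y) : 1 ≤ 1 + |y|)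

lemma mono {m : ℕ} (hq : HasMoment n q) (hmn : m ≤ n) : HasMoment m q := by
  have hle (y : ℝ) : (1 + |y|) ^ m ≤ (1 + |y|) ^ n :=
    pow_le_pow_right₀ (le_add_of_nonneg_right (abs_nonneg y)) hmn
  refine Integrable.congr (hq.integrable_mul (c := fun y : ℝ => ((1 + |y|) ^ m : ℝ)) (B := 1)
    (by fun_prop : Continuous _).aestronglyMeasurable fun y => ?_) (ae_of_all _ fun y => ?_)
  · rw [Complex.norm_real, Real.norm_of_nonneg (by positivity), one_mul]
    exact hle y
  · simp

lemma mul_bounded (hq : HasMoment n q) (hqf : AEStronglyMeasurable fun y => q y * f y)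
    (hf : ∀ y, ‖f y‖ ≤ C) : HasMoment n fun y => q y * f y := by
  refine (hq.norm.const_mul C).mono' ?_ (ae_of_all _ fun y => ?_)
  · exact (by fun_prop : Continuous fun y : ℝ => (1 + |y|) ^ n).aestronglyMeasurable.smul hqf
  · rw [← smul_mul_assoc, norm_mul, mul_comm]
    exact mul_le_mul_of_nonneg_right (hf y) (norm_nonneg _)

lemma comp_neg (hq : HasMoment n q) : HasMoment n fun y => q (-y) := by
  simpa only [HasMoment, abs_neg] using Integrable.comp_neg hq

lemma integrable_prod_mul (hq : HasMoment n q) (hf : HasMoment n f) {K : ℝ → ℂ}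
    (hK : Continuous K) (hKn : ∀ w, ‖K w‖ ≤ |w| ^ n) :
    Integrable fun p : ℝ × ℝ => K (p.1 - p.2) * (q p.1 * f p.2) := by
  refine (hq.integrable_weight_mul_norm.mul_prod hf.integrable_weight_mul_norm).mono'
    ((by fun_prop : Continuous fun p : ℝ × ℝ => K (p.1 - p.2)).aestronglyMeasurable.mul
      (hq.aestronglyMeasurable.comp_fst.mul hf.aestronglyMeasurable.comp_snd))
    (ae_of_all _ fun p => ?_)
  calc ‖K (p.1 - p.2) * (q p.1 * f p.2)‖ ≤ |p.1 - p.2| ^ n * (‖q p.1‖ * ‖f p.2‖) := by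
        rw [norm_mul, norm_mul]
        exact mul_le_mul_of_nonneg_right (hKn _) (by positivity)
    _ ≤ ((1 + |p.1|) * (1 + |p.2|)) ^ n * (‖q p.1‖ * ‖f p.2‖) := by
        gcongr
        exact abs_sub_le_one_add_abs_mul _ _
    _ = (1 + |p.1|) ^ n * ‖q p.1‖ * ((1 + |p.2|) ^ n * ‖f p.2‖) := by
        rw [mul_pow]
        ring

end HasMoment

end Moments

section Volterra

lemma abs_posPart_le (z : ℝ) : |z⁺| ≤ |z| := by
  rw [abs_of_nonneg (posPart_nonneg z)]
  exact sup_le (le_abs_self z) (abs_nonneg z)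

lemma posPart_sub_mul_one_add_negPart_le (x y : ℝ) :
    (y - x)⁺ * (1 + y⁻) ≤ (1 + x⁻) * (1 + |y|) := by
  rcases le_total y x with hyx | hxy
  · rw [posPart_eq_zero.mpr (sub_nonpos.mpr hyx), zero_mul]
    exact mul_nonneg (add_nonneg zero_le_one (negPart_nonneg x)) (by positivity)
  rw [posPart_eq_self.mpr (sub_nonneg.mpr hxy)]
  rcases le_total 0 y with hy | hy
  · rw [negPart_eq_zero.mpr hy, abs_of_nonneg hy]
    nlinarith [neg_le_negPart x, negPart_nonneg x, mul_nonneg (negPart_nonneg x) hy]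
  · rw [negPart_eq_neg.mpr hy, negPart_eq_neg.mpr (hxy.trans hy), abs_of_nonpos hy]
    nlinarith

lemma integral_posPart_sub_mul {K : ℝ → ℂ} (hK : K 0 = 0) (g : ℝ → ℂ) (x : ℝ) :
    ∫ y, K (y - x)⁺ * g y = ∫ y in Ioi x, K (y - x) * g y := by
  rw [← setIntegral_eq_integral_of_forall_compl_eq_zero (s := Ioi x) fun y hy => ?_]
  · refine setIntegral_congr_fun measurableSet_Ioi fun y hy => ?_
    simp only [posPart_eq_self.mpr (sub_nonneg.mpr (mem_Ioi.mp hy).le)]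
  · rw [posPart_eq_zero.mpr (sub_nonpos.mpr (notMem_Ioi.mp hy)), hK, zero_mul]

lemma aestronglyMeasurable_of_forall_restrict_Ioi_or_eq {E : Type*} [TopologicalSpace E]
    [TopologicalSpace.PseudoMetrizableSpace E] {g g' : ℝ → E} (hg' : AEStronglyMeasurable g')
    (hg : ∀ x, AEStronglyMeasurable g (volume.restrict (Ioi x)) ∨ g x = g' x) :
    AEStronglyMeasurable g := by
  set U := {x | AEStronglyMeasurable g (volume.restrict (Ioi x))}
  obtain ⟨T, hTU, hT, hTeq⟩ :=
    TopologicalSpace.isOpen_biUnion_countable U Ioi fun x _ => isOpen_Ioi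
  set s := ⋃ x ∈ U, Ioi x
  have hs : MeasurableSet s := (isOpen_biUnion fun x _ => isOpen_Ioi).measurableSet
  have hon : AEStronglyMeasurable g (volume.restrict s) := by
    have := hT.to_subtype
    rw [← hTeq, biUnion_eq_iUnion]
    exact AEStronglyMeasurable.iUnion fun x => hTU x.2
  have hoff : AEStronglyMeasurable g (volume.restrict sᶜ) := by
    have hUs : (U \ s).Subsingleton := fun x hx y hy =>
      le_antisymm (not_lt.mp fun h => hx.2 (mem_biUnion hy.1 h))
        (not_lt.mp fun h => hy.2 (mem_biUnion hx.1 h))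
    refine (hg'.mono_measure Measure.restrict_le_self).congr ?_
    rw [EventuallyEq, ae_restrict_iff' hs.compl]
    filter_upwards [hUs.countable.ae_notMem volume] with x hx hxs
    exact ((hg x).resolve_left fun hxU => hx ⟨hxU, hxs⟩).symm
  rw [← Measure.restrict_univ (μ := volume), ← union_compl_self s]
  exact aestronglyMeasurable_union_iff.mpr ⟨hon, hoff⟩

lemma aestronglyMeasurable_of_Dker_mul {k x : ℝ} {g : ℝ → ℂ}
    (hg : AEStronglyMeasurable (fun y => Dker k (y - x) * g y) (volume.restrict (Ioi x))) :
    AEStronglyMeasurable g (volume.restrict (Ioi x)) := by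
  have hcont : Continuous fun y => Dker k (y - x) := (continuous_Dker k).comp (by fun_prop)
  refine (hcont.measurable.inv.aestronglyMeasurable.mul hg).congr (ae_restrict_of_ae ?_)
  have hzeros : {y | Dker k (y - x) = 0}.Countable :=
    (countable_Dker_eq_zero k).preimage (sub_left_injective (b := x))
  filter_upwards [hzeros.ae_notMem volume] with y hy
  exact inv_mul_cancel_left₀ hy (g y)

/-- `h` is a bounded solution of `h(x) = F(x) + ∫_x^∞ D_k(y-x) q(y) h(y) dy`, with `q h`
measurable. Since `D_k(0) = 0`, the integral is written over the whole line with the kernel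
evaluated at the positive part of `y - x`. The Jost solution `m₊(·,k)` is the case `F = 1`. -/
structure IsVolterraSolution (q : ℝ → ℂ) (k : ℝ) (F h : ℝ → ℂ) : Prop where
  exists_bound : ∃ C, ∀ x, ‖h x‖ ≤ C
  aestronglyMeasurable_mul : AEStronglyMeasurable fun y => q y * h y
  eq_add_integral : ∀ x, h x = F x + ∫ y, Dker k (y - x)⁺ * (q y * h y)

namespace IsVolterraSolution

variable {q F h : ℝ → ℂ} {k : ℝ}

-- Measurability of `h` is not assumed: wherever the integrand fails to be measurable, the Bochner
-- integral is `0` and the equation reads `h x = F x`.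
lemma of_eq_add_setIntegral (hq : AEStronglyMeasurable q) (hF : AEStronglyMeasurable F)
    (hbound : ∃ C, ∀ x, ‖h x‖ ≤ C)
    (heq : ∀ x, h x = F x + ∫ y in Ioi x, Dker k (y - x) * (q y * h y)) :
    IsVolterraSolution q k F h where
  exists_bound := hbound
  aestronglyMeasurable_mul := by
    refine aestronglyMeasurable_of_forall_restrict_Ioi_or_eq (hq.mul hF) fun x => ?_
    refine or_iff_not_imp_left.mpr fun hx => ?_
    have hnot : ¬ IntegrableOn (fun y => Dker k (y - x) * (q y * h y)) (Ioi x) :=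
      fun hint => hx (aestronglyMeasurable_of_Dker_mul hint.aestronglyMeasurable)
    rw [Pi.mul_apply, heq x, integral_undef hnot, add_zero]
  eq_add_integral x := by rw [integral_posPart_sub_mul (Dker_zero_right k), ← heq x]

lemma hasMoment {n : ℕ} (hq : HasMoment n q) (hh : IsVolterraSolution q k F h) :
    HasMoment n fun y => q y * h y :=
  have ⟨_, hC⟩ := hh.exists_bound
  hq.mul_bounded hh.aestronglyMeasurable_mul hC

end IsVolterraSolution

lemma HasMoment.integrable_posPart_sub_mul {n : ℕ} {g K : ℝ → ℂ} (hg : HasMoment n g)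
    (hK : Continuous K) (hKn : ∀ w, ‖K w‖ ≤ |w| ^ n) (x : ℝ) :
    Integrable fun y => K (y - x)⁺ * g y := by
  have hcont : Continuous fun y => K (y - x)⁺ :=
    hK.comp (continuous_posPart.comp (by fun_prop))
  refine hg.integrable_mul hcont.aestronglyMeasurable (B := (1 + |x|) ^ n) fun y => ?_
  calc ‖K (y - x)⁺‖ ≤ |(y - x)⁺| ^ n := hKn _
    _ ≤ ((1 + |x|) * (1 + |y|)) ^ n := by
        gcongr
        rw [mul_comm]
        exact (abs_posPart_le _).trans (abs_sub_le_one_add_abs_mul y x)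
    _ = (1 + |x|) ^ n * (1 + |y|) ^ n := mul_pow _ _ _

lemma HasMoment.integrable_Dker_mul {g : ℝ → ℂ} (hg : HasMoment 1 g) (k x : ℝ) :
    Integrable fun y => Dker k (y - x)⁺ * g y :=
  hg.integrable_posPart_sub_mul (continuous_Dker k) (by simpa using norm_Dker_le k) x

namespace IsVolterraSolution

variable {q F F₁ F₂ h h₁ h₂ : ℝ → ℂ} {k : ℝ}

lemma sub (hq : HasMoment 1 q) (hh₁ : IsVolterraSolution q k F₁ h₁)
    (hh₂ : IsVolterraSolution q k F₂ h₂) :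
    IsVolterraSolution q k (fun x => F₁ x - F₂ x) fun x => h₁ x - h₂ x where
  exists_bound :=
    have ⟨C₁, hC₁⟩ := hh₁.exists_bound
    have ⟨C₂, hC₂⟩ := hh₂.exists_bound
    ⟨C₁ + C₂, fun x => norm_sub_le_of_le (hC₁ x) (hC₂ x)⟩
  aestronglyMeasurable_mul := by
    simpa only [mul_sub] using hh₁.aestronglyMeasurable_mul.fun_sub hh₂.aestronglyMeasurable_mul
  eq_add_integral x := by
    simp only [mul_sub]
    rw [integral_sub ((hh₁.hasMoment hq).integrable_Dker_mul k x)
      ((hh₂.hasMoment hq).integrable_Dker_mul k x), hh₁.eq_add_integral x, hh₂.eq_add_integral x]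
    ring

lemma const_mul (c : ℂ) (hh : IsVolterraSolution q k F h) :
    IsVolterraSolution q k (fun x => c * F x) fun x => c * h x where
  exists_bound :=
    have ⟨C, hC⟩ := hh.exists_bound
    ⟨‖c‖ * C, fun x => by grw [norm_mul, hC x]⟩
  aestronglyMeasurable_mul := by
    simpa only [mul_left_comm c] using hh.aestronglyMeasurable_mul.const_mul c
  eq_add_integral x := by
    simp only [mul_left_comm _ c, integral_const_mul]
    rw [← mul_add, ← hh.eq_add_integral x]

end IsVolterraSolution

lemma one_add_negPart_pos (x : ℝ) : 0 < 1 + x⁻ :=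
  add_pos_of_pos_of_nonneg one_pos (negPart_nonneg x)

lemma HasMoment.integrable_weight_mul_norm_div {g : ℝ → ℂ} (hg : HasMoment 1 g) :
    Integrable fun y => (1 + |y|) * (‖g y‖ / (1 + y⁻)) := by
  have hneg : Measurable fun y : ℝ => 1 + y⁻ :=
    (continuous_const.add continuous_negPart).measurable
  refine hg.integrable_weight_mul_norm.mono' ?_ (ae_of_all _ fun y => ?_)
  · exact (by fun_prop : Continuous fun y : ℝ => 1 + |y|).aestronglyMeasurable.mul
      (hg.aestronglyMeasurable.norm.div₀ hneg.aestronglyMeasurable)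
  · have hy : 1 ≤ 1 + y⁻ := le_add_of_nonneg_right (negPart_nonneg y)
    rw [pow_one, Real.norm_of_nonneg (by positivity)]
    gcongr
    exact div_le_self (norm_nonneg _) hy

lemma norm_integral_Dker_mul_le {g : ℝ → ℂ} (hg : HasMoment 1 g) (k x : ℝ) :
    ‖∫ y, Dker k (y - x)⁺ * g y‖ ≤
      (1 + x⁻) * ∫ y in Ioi x, (1 + |y|) * (‖g y‖ / (1 + y⁻)) := by
  rw [integral_posPart_sub_mul (Dker_zero_right k), ← integral_const_mul]
  refine norm_integral_le_of_norm_le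
    (hg.integrable_weight_mul_norm_div.integrableOn.const_mul _) ?_
  refine (ae_restrict_iff' measurableSet_Ioi).mpr (ae_of_all _ fun y hy => ?_)
  have hweight : (y - x)⁺ ≤ (1 + x⁻) * (1 + |y|) / (1 + y⁻) :=
    (le_div_iff₀ (one_add_negPart_pos y)).mpr (posPart_sub_mul_one_add_negPart_le x y)
  calc ‖Dker k (y - x) * g y‖ ≤ |y - x| * ‖g y‖ := by grw [norm_mul, norm_Dker_le]
    _ = (y - x)⁺ * ‖g y‖ := by
        rw [abs_of_pos (sub_pos.mpr hy), posPart_eq_self.mpr (sub_pos.mpr hy).le]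
    _ ≤ (1 + x⁻) * (1 + |y|) / (1 + y⁻) * ‖g y‖ := by grw [hweight]
    _ = (1 + x⁻) * ((1 + |y|) * (‖g y‖ / (1 + y⁻))) := by ring

namespace IsVolterraSolution

variable {q F h h₁ h₂ : ℝ → ℂ} {k : ℝ}

lemma norm_le_mul_exp (hq : HasMoment 1 q) (hh : IsVolterraSolution q k F h) {A a : ℝ}
    (hF : ∀ x, a ≤ x → ‖F x‖ ≤ A * (1 + x⁻)) :
    ‖h a‖ ≤ A * Real.exp (∫ y, (1 + |y|) * ‖q y‖) * (1 + a⁻) := by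
  have hw : Integrable fun y => (1 + |y|) * ‖q y‖ := by
    simpa only [pow_one] using hq.integrable_weight_mul_norm
  have hw0 (y : ℝ) : 0 ≤ (1 + |y|) * ‖q y‖ := by positivity
  have hwφ (y : ℝ) : (1 + |y|) * ‖q y‖ * (‖h y‖ / (1 + y⁻)) =
      (1 + |y|) * (‖q y * h y‖ / (1 + y⁻)) := by
    rw [norm_mul]
    ring
  have hgronwall : ‖h a‖ / (1 + a⁻) ≤ A * Real.exp (∫ y in Ioi a, (1 + |y|) * ‖q y‖) := by
    refine le_mul_exp_integral_Ioi_of_le_add_integral_Ioi (φ := fun x => ‖h x‖ / (1 + x⁻))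
      (fun y _ => hw0 y) hw.integrableOn ?_ fun x hx => ?_
    · simpa only [hwφ] using (hh.hasMoment hq).integrable_weight_mul_norm_div.integrableOn
    · simp only [hwφ]
      rw [div_le_iff₀ (one_add_negPart_pos x), hh.eq_add_integral x, add_mul,
        mul_comm (integral _ _)]
      exact norm_add_le_of_le (hF x hx) (norm_integral_Dker_mul_le (hh.hasMoment hq) k x)
  have hA : 0 ≤ A :=
    nonneg_of_mul_nonneg_left ((norm_nonneg _).trans (hF a le_rfl)) (one_add_negPart_pos a)
  rw [← div_le_iff₀ (one_add_negPart_pos a)]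
  exact hgronwall.trans <| mul_le_mul_of_nonneg_left
    (Real.exp_le_exp.mpr (setIntegral_le_integral hw (ae_of_all _ hw0))) hA

theorem eq_zero (hq : HasMoment 1 q) (hh : IsVolterraSolution q k 0 h) (x : ℝ) : h x = 0 := by
  simpa using hh.norm_le_mul_exp hq (A := 0) (a := x) fun x _ => by simp

theorem unique (hq : HasMoment 1 q) (hh₁ : IsVolterraSolution q k F h₁)
    (hh₂ : IsVolterraSolution q k F h₂) : h₁ = h₂ := by
  have hsub := hh₁.sub hq hh₂
  simp only [sub_self] at hsub
  exact funext fun x => sub_eq_zero.mp (hsub.eq_zero hq x)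

end IsVolterraSolution

end Volterra

section EnergyDependence

variable {q : ℝ → ℂ}

lemma IsVolterraSolution.change_energy {F h : ℝ → ℂ} {k₀ : ℝ} (hq : HasMoment 1 q)
    (hh : IsVolterraSolution q k₀ F h) (k : ℝ) :
    IsVolterraSolution q k
      (fun x => F x - ∫ y, (Dker k (y - x)⁺ - Dker k₀ (y - x)⁺) * (q y * h y)) h where
  exists_bound := hh.exists_bound
  aestronglyMeasurable_mul := hh.aestronglyMeasurable_mul
  eq_add_integral x := by
    simp only [sub_mul]
    rw [integral_sub ((hh.hasMoment hq).integrable_Dker_mul k x)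
      ((hh.hasMoment hq).integrable_Dker_mul k₀ x), hh.eq_add_integral x]
    ring

lemma norm_integral_Dker_sub_le {g : ℝ → ℂ} (hg : HasMoment 2 g) (k : ℝ) {a x : ℝ}
    (hax : a ≤ x) :
    ‖∫ y, (Dker k (y - x)⁺ - Dker 0 (y - x)⁺) * g y‖ ≤
      2 * |k| * (1 + |a|) ^ 2 * ∫ y, (1 + |y|) ^ 2 * ‖g y‖ := by
  rw [← integral_const_mul]
  refine norm_integral_le_of_norm_le (hg.integrable_weight_mul_norm.const_mul _)
    (ae_of_all _ fun y => ?_)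
  have hpos : |(y - x)⁺| ≤ (1 + |a|) * (1 + |y|) := by
    calc |(y - x)⁺| = (y - x)⁺ := abs_of_nonneg (posPart_nonneg _)
      _ ≤ (y - a)⁺ := posPart_mono (sub_le_sub_left hax y)
      _ ≤ |y - a| := sup_le (le_abs_self _) (abs_nonneg _)
      _ ≤ (1 + |a|) * (1 + |y|) := by
        rw [mul_comm]
        exact abs_sub_le_one_add_abs_mul y a
  calc ‖(Dker k (y - x)⁺ - Dker 0 (y - x)⁺) * g y‖ ≤ 2 * |k| * |(y - x)⁺| ^ 2 * ‖g y‖ := by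
        rw [norm_mul, Dker_zero_left]
        grw [norm_Dker_sub_le]
    _ ≤ 2 * |k| * ((1 + |a|) * (1 + |y|)) ^ 2 * ‖g y‖ := by grw [hpos]
    _ = 2 * |k| * (1 + |a|) ^ 2 * ((1 + |y|) ^ 2 * ‖g y‖) := by ring

/-- For every `k`, the function `m(·,k)` is a Jost solution for `q` normalised at `+∞`. -/
def IsJostFamily (q : ℝ → ℂ) (m : ℝ → ℝ → ℂ) : Prop :=
  ∀ k, IsVolterraSolution q k 1 fun x => m x k

namespace IsJostFamily

variable {m : ℝ → ℝ → ℂ}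

lemma norm_le (hq : HasMoment 1 q) (hm : IsJostFamily q m) (x k : ℝ) :
    ‖m x k‖ ≤ Real.exp (∫ y, (1 + |y|) * ‖q y‖) * (1 + x⁻) := by
  simpa using (hm k).norm_le_mul_exp hq (A := 1) (a := x) fun x _ => by
    simp

theorem tendsto (hq : HasMoment 2 q) (hm : IsJostFamily q m) (x : ℝ) :
    Tendsto (m x) (𝓝 0) (𝓝 (m x 0)) := by
  have hq1 := hq.mono one_le_two
  set c := (1 + |x|) ^ 2 * ∫ y, (1 + |y|) ^ 2 * ‖q y * m y 0‖
  set M := Real.exp (∫ y, (1 + |y|) * ‖q y‖)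
  have hc : 0 ≤ c := mul_nonneg (by positivity) (integral_nonneg fun y => by positivity)
  have hbound (k : ℝ) : ‖m x k - m x 0‖ ≤ 2 * |k| * c * M * (1 + x⁻) := by
    refine ((hm k).sub hq1 ((hm 0).change_energy hq1 k)).norm_le_mul_exp hq1 fun z hz => ?_
    rw [sub_sub_cancel]
    have hweight : 1 ≤ 1 + z⁻ := le_add_of_nonneg_right (negPart_nonneg z)
    have hk : 0 ≤ 2 * |k| * c := mul_nonneg (by positivity) hc
    refine le_trans ?_ (le_mul_of_one_le_right hk hweight)
    simpa only [c, mul_assoc] using norm_integral_Dker_sub_le ((hm 0).hasMoment hq) k hz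
  rw [tendsto_iff_norm_sub_tendsto_zero]
  have hlim : Tendsto (fun k : ℝ => 2 * |k| * c * M * (1 + x⁻)) (𝓝 0) (𝓝 0) :=
    (by fun_prop : Continuous fun k : ℝ => 2 * |k| * c * M * (1 + x⁻)).tendsto' 0 0 (by simp)
  exact squeeze_zero (fun _ => norm_nonneg _) hbound hlim

end IsJostFamily

end EnergyDependence

section ZeroEnergy

/-- For a zero-energy Jost solution `f` of a non-generic potential `q`, its limit at `-∞`. -/
noncomputable def jostLimit (q f : ℝ → ℂ) : ℂ := 1 + ∫ y : ℝ, (y : ℂ) * (q y * f y)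

lemma HasMoment.integrable_ofReal_mul {g : ℝ → ℂ} (hg : HasMoment 1 g) :
    Integrable fun y : ℝ => (y : ℂ) * g y :=
  hg.integrable_mul Complex.continuous_ofReal.aestronglyMeasurable (B := 1) fun y => by
    simp

lemma HasMoment.integrable_Dker_sub_mul {g : ℝ → ℂ} (hg : HasMoment 1 g) (k x : ℝ) :
    Integrable fun y => Dker k (x - y)⁺ * g y := by
  simpa [add_comm, sub_eq_add_neg] using (hg.comp_neg.integrable_Dker_mul k (-x)).comp_neg

lemma integral_Dker_zero_mul_of_integral_eq_zero {g : ℝ → ℂ} (hg : HasMoment 1 g)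
    (hg0 : ∫ y, g y = 0) (x : ℝ) :
    ∫ y, Dker 0 (y - x)⁺ * g y = (∫ y : ℝ, (y : ℂ) * g y) + ∫ y, Dker 0 (x - y)⁺ * g y := by
  have hsplit (y : ℝ) : Dker 0 (y - x)⁺ * g y =
      y * g y - x * g y + Dker 0 (x - y)⁺ * g y := by
    have hpos : (y - x)⁺ = y - x + (x - y)⁺ := by
      rw [← neg_sub y x, posPart_neg]
      exact sub_eq_iff_eq_add.mp (posPart_sub_negPart (y - x))
    rw [hpos, Dker_zero_left, Dker_zero_left]
    push_cast
    ring
  have hx := hg.integrable.const_mul (x : ℂ)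
  have hyx : Integrable fun y : ℝ => y * g y - x * g y := hg.integrable_ofReal_mul.sub hx
  simp only [hsplit]
  rw [integral_add hyx (hg.integrable_Dker_sub_mul 0 x),
    integral_sub hg.integrable_ofReal_mul hx, integral_const_mul, hg0, mul_zero, sub_zero]

namespace IsVolterraSolution

variable {q f : ℝ → ℂ}

lemma eq_jostLimit_add_integral (hq : HasMoment 1 q) (hf : IsVolterraSolution q 0 1 f)
    (hqf : ∫ y, q y * f y = 0) (x : ℝ) :
    f x = jostLimit q f + ∫ y, Dker 0 (x - y)⁺ * (q y * f y) := by
  rw [hf.eq_add_integral x, integral_Dker_zero_mul_of_integral_eq_zero (hf.hasMoment hq) hqf,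
    jostLimit, Pi.one_apply, add_assoc]

theorem tendsto_atBot (hq : HasMoment 1 q) (hf : IsVolterraSolution q 0 1 f)
    (hqf : ∫ y, q y * f y = 0) : Tendsto f atBot (𝓝 (jostLimit q f)) := by
  have hg := hf.hasMoment hq
  have hlim : Tendsto (fun x => ∫ y, Dker 0 (x - y)⁺ * (q y * f y)) atBot (𝓝 0) := by
    rw [← integral_zero ℝ ℂ]
    refine tendsto_integral_filter_of_dominated_convergence _
      (Eventually.of_forall fun x => (hg.integrable_Dker_sub_mul 0 x).aestronglyMeasurable)
      ?_ hg.integrable_ofReal_mul.norm (ae_of_all _ fun y => ?_)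
    · filter_upwards [eventually_le_atBot 0] with x hx
      refine ae_of_all _ fun y => ?_
      have hle : (x - y)⁺ ≤ |y| :=
        sup_le ((sub_le_sub_right hx y).trans (by simpa using neg_le_abs y)) (abs_nonneg y)
      simpa [Dker_zero_left, abs_of_nonneg (posPart_nonneg (x - y))] using
        mul_le_mul_of_nonneg_right hle (norm_nonneg (q y * f y))
    · refine tendsto_const_nhds.congr' ?_
      filter_upwards [eventually_le_atBot y] with x hx
      rw [posPart_eq_zero.mpr (sub_nonpos.mpr hx), Dker_zero_right, zero_mul]
  rw [← add_zero (jostLimit q f)]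
  exact (hlim.const_add _).congr fun x => (hf.eq_jostLimit_add_integral hq hqf x).symm

lemma comp_neg (hq : HasMoment 1 q) (hf : IsVolterraSolution q 0 1 f)
    (hqf : ∫ y, q y * f y = 0) :
    IsVolterraSolution (fun y => q (-y)) 0 (fun _ => jostLimit q f) fun x => f (-x) where
  exists_bound :=
    have ⟨C, hC⟩ := hf.exists_bound
    ⟨C, fun x => hC (-x)⟩
  aestronglyMeasurable_mul := (hf.hasMoment hq).comp_neg.aestronglyMeasurable
  eq_add_integral x := by
    rw [hf.eq_jostLimit_add_integral hq hqf, ← integral_neg_eq_self]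
    simp only [sub_neg_eq_add, neg_add_eq_sub]

theorem jostLimit_ne_zero (hq : HasMoment 1 q) (hf : IsVolterraSolution q 0 1 f)
    (hqf : ∫ y, q y * f y = 0) : jostLimit q f ≠ 0 := by
  intro ha
  have hrefl := hf.comp_neg hq hqf
  rw [ha] at hrefl
  have hf0 (x : ℝ) : f x = 0 := by simpa using hrefl.eq_zero hq.comp_neg (-x)
  simp [jostLimit, hf0] at ha

lemma eq_inv_jostLimit_mul (hq : HasMoment 1 q) (hf : IsVolterraSolution q 0 1 f)
    (hqf : ∫ y, q y * f y = 0) {f' : ℝ → ℂ}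
    (hf' : IsVolterraSolution (fun y => q (-y)) 0 1 f') (x : ℝ) :
    f' x = (jostLimit q f)⁻¹ * f (-x) := by
  have hscaled := (hf.comp_neg hq hqf).const_mul (jostLimit q f)⁻¹
  rw [inv_mul_cancel₀ (hf.jostLimit_ne_zero hq hqf)] at hscaled
  exact congrFun (hf'.unique hq.comp_neg hscaled) x

lemma integral_comp_neg_mul_eq_zero (hq : HasMoment 1 q) (hf : IsVolterraSolution q 0 1 f)
    (hqf : ∫ y, q y * f y = 0) {f' : ℝ → ℂ}
    (hf' : IsVolterraSolution (fun y => q (-y)) 0 1 f') : ∫ y, q (-y) * f' y = 0 := by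
  simp only [hf.eq_inv_jostLimit_mul hq hqf hf', mul_left_comm (q _)]
  rw [integral_const_mul, integral_neg_eq_self (fun y => q y * f y), hqf, mul_zero]

lemma jostLimit_comp_neg (hq : HasMoment 1 q) (hf : IsVolterraSolution q 0 1 f)
    (hqf : ∫ y, q y * f y = 0) {f' : ℝ → ℂ}
    (hf' : IsVolterraSolution (fun y => q (-y)) 0 1 f') :
    jostLimit (fun y => q (-y)) f' = (jostLimit q f)⁻¹ := by
  have hmoment : ∫ y : ℝ, (y : ℂ) * (q y * f y) = jostLimit q f - 1 := by rw [jostLimit]; ring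
  have hint : ∫ y : ℝ, (y : ℂ) * (q (-y) * f' y) = -((jostLimit q f)⁻¹ * (jostLimit q f - 1)) := by
    rw [← hmoment, ← integral_const_mul, ← integral_neg, ← integral_neg_eq_self]
    refine integral_congr_ae (ae_of_all _ fun y => ?_)
    simp only [hf.eq_inv_jostLimit_mul hq hqf hf', neg_neg]
    push_cast
    ring
  have ha := hf.jostLimit_ne_zero hq hqf
  rw [jostLimit, hint]
  field_simp
  ring

lemma conj (hq : ∀ y, starRingEnd ℂ (q y) = q y) (hf : IsVolterraSolution q 0 1 f) :
    IsVolterraSolution q 0 1 fun x => starRingEnd ℂ (f x) where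
  exists_bound := by simpa using hf.exists_bound
  aestronglyMeasurable_mul := by
    simpa only [map_mul, hq] using
      Complex.continuous_conj.comp_aestronglyMeasurable hf.aestronglyMeasurable_mul
  eq_add_integral x := by
    rw [hf.eq_add_integral x, map_add, ← integral_conj]
    simp [Dker_zero_left, hq]

theorem exists_ofReal_eq_jostLimit (hq : HasMoment 1 q) (hreal : ∀ y, starRingEnd ℂ (q y) = q y)
    (hf : IsVolterraSolution q 0 1 f) : ∃ a : ℝ, (a : ℂ) = jostLimit q f := by
  have hfreal (x : ℝ) : starRingEnd ℂ (f x) = f x := congrFun ((hf.conj hreal).unique hq hf) x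
  have hconj : starRingEnd ℂ (jostLimit q f) = jostLimit q f := by
    rw [jostLimit, map_add, ← integral_conj]
    simp [hreal, hfreal]
  exact ⟨_, Complex.conj_eq_iff_re.mp hconj⟩

end IsVolterraSolution

end ZeroEnergy

section LowEnergy

namespace HasMoment

variable {n : ℕ} {g f : ℝ → ℂ}

lemma integral_mul_add_integral (hg : HasMoment n g) (hf : HasMoment n f) {K : ℝ → ℂ}
    (hK : Continuous K) (hKn : ∀ w, ‖K w‖ ≤ |w| ^ n) (c : ℂ) :
    ∫ x, g x * (c + ∫ y, K (x - y) * f y) =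
      c * (∫ x, g x) + ∫ p : ℝ × ℝ, K (p.1 - p.2) * (g p.1 * f p.2) := by
  have hint := hg.integrable_prod_mul hf hK hKn
  have hinner (x : ℝ) : ∫ y, K (x - y) * (g x * f y) = g x * ∫ y, K (x - y) * f y := by
    rw [← integral_const_mul]
    simp only [mul_left_comm]
  have hiter : Integrable fun x => g x * ∫ y, K (x - y) * f y := by
    simpa only [hinner] using hint.integral_prod_left
  rw [Measure.volume_eq_prod, integral_prod _ hint]
  simp only [hinner, mul_add, mul_comm _ c]
  rw [integral_add (hg.integrable.const_mul c) hiter, integral_const_mul]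

lemma integrable_prod_posPart_mul (hg : HasMoment n g) (hf : HasMoment n f) {K : ℝ → ℂ}
    (hK : Continuous K) (hKn : ∀ w, ‖K w‖ ≤ |w| ^ n) :
    Integrable fun p : ℝ × ℝ => K (p.1 - p.2)⁺ * (g p.1 * f p.2) :=
  hg.integrable_prod_mul hf (K := fun w => K w⁺) (hK.comp continuous_posPart) fun w =>
    (hKn _).trans (pow_le_pow_left₀ (abs_nonneg _) (abs_posPart_le w) n)

lemma integral_prod_sub_sq_mul (hg : HasMoment 2 g) (hg0 : ∫ y, g y = 0) :
    ∫ p : ℝ × ℝ, ((p.1 - p.2 : ℝ) : ℂ) ^ 2 * (g p.1 * g p.2) =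
      -2 * (∫ y : ℝ, (y : ℂ) * g y) ^ 2 := by
  have hg1 := (hg.mono one_le_two).integrable_ofReal_mul
  have hg2 : Integrable fun y : ℝ => (y : ℂ) ^ 2 * g y :=
    hg.integrable_mul (by fun_prop : Continuous fun y : ℝ => (y : ℂ) ^ 2).aestronglyMeasurable
      (B := 1) fun y => by
        rw [norm_pow, Complex.norm_real, Real.norm_eq_abs, one_mul]
        gcongr
        simp
  have hexpand (p : ℝ × ℝ) : ((p.1 - p.2 : ℝ) : ℂ) ^ 2 * (g p.1 * g p.2) =
      p.1 ^ 2 * g p.1 * g p.2 + g p.1 * (p.2 ^ 2 * g p.2) -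
        2 * (p.1 * g p.1 * (p.2 * g p.2)) := by
    push_cast
    ring
  have hdiag : Integrable fun p : ℝ × ℝ => p.1 ^ 2 * g p.1 * g p.2 + g p.1 * (p.2 ^ 2 * g p.2) :=
    (hg2.mul_prod hg.integrable).add (hg.integrable.mul_prod hg2)
  simp only [hexpand]
  rw [integral_sub hdiag ((hg1.mul_prod hg1).const_mul 2), Measure.volume_eq_prod,
    integral_add (hg2.mul_prod hg.integrable) (hg.integrable.mul_prod hg2), integral_const_mul,
    integral_prod_mul (fun x : ℝ => (x : ℂ) ^ 2 * g x) g,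
    integral_prod_mul g fun x : ℝ => (x : ℂ) ^ 2 * g x,
    integral_prod_mul (fun x : ℝ => (x : ℂ) * g x) fun x : ℝ => (x : ℂ) * g x, hg0]
  ring

lemma integral_prod_posPart_sub_sq_mul (hg : HasMoment 2 g) (hg0 : ∫ y, g y = 0) :
    ∫ p : ℝ × ℝ, (((p.1 - p.2)⁺ : ℝ) : ℂ) ^ 2 * (g p.1 * g p.2) =
      -(∫ y : ℝ, (y : ℂ) * g y) ^ 2 := by
  have hint := hg.integrable_prod_posPart_mul hg (K := fun w : ℝ => (w : ℂ) ^ 2) (by fun_prop)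
    fun w => by simp
  have hsq (w : ℝ) : (w : ℂ) ^ 2 = ((w⁺ : ℝ) : ℂ) ^ 2 + (((-w)⁺ : ℝ) : ℂ) ^ 2 := by
    rcases le_total 0 w with hw | hw
    · simp [posPart_eq_self.mpr hw, posPart_eq_zero.mpr (neg_nonpos.mpr hw)]
    · simp [posPart_eq_zero.mpr hw, posPart_eq_self.mpr (neg_nonneg.mpr hw)]
  have hsum := hg.integral_prod_sub_sq_mul hg0
  have hswap : ∫ p : ℝ × ℝ, (((-(p.1 - p.2))⁺ : ℝ) : ℂ) ^ 2 * (g p.1 * g p.2) =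
      ∫ p : ℝ × ℝ, (((p.1 - p.2)⁺ : ℝ) : ℂ) ^ 2 * (g p.1 * g p.2) := by
    rw [Measure.volume_eq_prod, ← integral_prod_swap]
    simp only [Prod.fst_swap, Prod.snd_swap, neg_sub, mul_comm (g _) (g _)]
  have hint' : Integrable fun p : ℝ × ℝ =>
      (((-(p.1 - p.2))⁺ : ℝ) : ℂ) ^ 2 * (g p.1 * g p.2) := by
    simpa only [Function.comp_def, Prod.fst_swap, Prod.snd_swap, neg_sub, mul_comm (g _) (g _),
      Measure.volume_eq_prod] using hint.swap
  simp only [hsq (_ - _), add_mul] at hsum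
  rw [integral_add hint hint', hswap] at hsum
  linear_combination hsum / 2

end HasMoment

lemma negPart_le_abs (x : ℝ) : x⁻ ≤ |x| := sup_le (neg_le_abs x) (abs_nonneg x)

namespace IsJostFamily

variable {q : ℝ → ℂ} {m : ℝ → ℝ → ℂ}

lemma integral_mul_mul_eq_jostLimit_mul_add (hq : HasMoment 1 q) (hm : IsJostFamily q m)
    (hqm : ∫ y, q y * m y 0 = 0) (k : ℝ) :
    ∫ x, (q x * m x k) * m x 0 = jostLimit q (m · 0) * (∫ x, q x * m x k) +
      ∫ p : ℝ × ℝ, Dker 0 (p.1 - p.2)⁺ * ((q p.1 * m p.1 k) * (q p.2 * m p.2 0)) := by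
  rw [← ((hm k).hasMoment hq).integral_mul_add_integral ((hm 0).hasMoment hq)
    (K := fun w => Dker 0 w⁺) ((continuous_Dker 0).comp continuous_posPart)
    (fun w => by simpa using (norm_Dker_le 0 _).trans (abs_posPart_le w))]
  simp only [← (hm 0).eq_jostLimit_add_integral hq hqm]

lemma integral_mul_mul_eq_integral_Dker_mul (hq : HasMoment 1 q) (hm : IsJostFamily q m)
    (hqm : ∫ y, q y * m y 0 = 0) (k : ℝ) :
    ∫ x, (q x * m x k) * m x 0 =
      ∫ p : ℝ × ℝ, Dker k (p.1 - p.2)⁺ * ((q p.1 * m p.1 k) * (q p.2 * m p.2 0)) := by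
  have hexpand := ((hm 0).hasMoment hq).integral_mul_add_integral ((hm k).hasMoment hq)
    (K := fun w => Dker k (-w)⁺)
    ((continuous_Dker k).comp (continuous_posPart.comp continuous_neg))
    (fun w => by simpa using (norm_Dker_le k _).trans (abs_posPart_le (-w))) 1
  have hJost (x : ℝ) : 1 + ∫ y, Dker k (y - x)⁺ * (q y * m y k) = m x k :=
    ((hm k).eq_add_integral x).symm
  simp only [neg_sub, hJost, hqm, mul_zero, zero_add] at hexpand
  have hcomm (x : ℝ) : (q x * m x k) * m x 0 = (q x * m x 0) * m x k := mul_right_comm _ _ _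
  simp only [hcomm]
  rw [hexpand, Measure.volume_eq_prod, ← integral_prod_swap]
  simp only [Prod.fst_swap, Prod.snd_swap, mul_comm (q _ * m _ 0)]

lemma jostLimit_mul_integral (hq : HasMoment 1 q) (hm : IsJostFamily q m)
    (hqm : ∫ y, q y * m y 0 = 0) (k : ℝ) :
    jostLimit q (m · 0) * ∫ y, q y * m y k = 2 * Complex.I * k *
      ∫ p : ℝ × ℝ, Eker k (p.1 - p.2)⁺ * ((q p.1 * m p.1 k) * (q p.2 * m p.2 0)) := by
  have hint (k' : ℝ) := ((hm k).hasMoment hq).integrable_prod_posPart_mul ((hm 0).hasMoment hq)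
    (continuous_Dker k') fun w => by simpa using norm_Dker_le k' w
  have hE (p : ℝ × ℝ) : 2 * Complex.I * k * (Eker k (p.1 - p.2)⁺ *
      ((q p.1 * m p.1 k) * (q p.2 * m p.2 0))) =
      Dker k (p.1 - p.2)⁺ * ((q p.1 * m p.1 k) * (q p.2 * m p.2 0)) -
        Dker 0 (p.1 - p.2)⁺ * ((q p.1 * m p.1 k) * (q p.2 * m p.2 0)) := by
    rw [Dker_zero_left, Dker_eq_add_Eker k]
    ring
  rw [← integral_const_mul (2 * Complex.I * (k : ℂ))]
  simp only [hE]
  rw [integral_sub (hint k) (hint 0), ← hm.integral_mul_mul_eq_integral_Dker_mul hq hqm,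
    hm.integral_mul_mul_eq_jostLimit_mul_add hq hqm, add_sub_cancel_right]

lemma norm_Eker_mul_le (hq : HasMoment 1 q) (hm : IsJostFamily q m) (k y z : ℝ) (w : ℂ) :
    ‖Eker k (y - z)⁺ * ((q y * m y k) * w)‖ ≤
      Real.exp (∫ y, (1 + |y|) * ‖q y‖) * ((1 + |y|) ^ 2 * ‖q y‖ * ((1 + |z|) ^ 2 * ‖w‖)) := by
  set M := Real.exp (∫ y, (1 + |y|) * ‖q y‖)
  have hweight : (y - z)⁺ * (1 + y⁻) ≤ (1 + |y|) * (1 + |z|) := by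
    refine (posPart_sub_mul_one_add_negPart_le z y).trans ?_
    grw [negPart_le_abs z, mul_comm]
  have hpos : |(y - z)⁺| ≤ (1 + |y|) * (1 + |z|) :=
    (abs_posPart_le _).trans (abs_sub_le_one_add_abs_mul y z)
  calc ‖Eker k (y - z)⁺ * ((q y * m y k) * w)‖
      ≤ |(y - z)⁺| ^ 2 * ((‖q y‖ * (M * (1 + y⁻))) * ‖w‖) := by
        rw [norm_mul, norm_mul, norm_mul]
        grw [norm_Eker_le, hm.norm_le hq]
    _ = M * (|(y - z)⁺| * ((y - z)⁺ * (1 + y⁻))) * (‖q y‖ * ‖w‖) := by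
        rw [abs_of_nonneg (posPart_nonneg _)]
        ring
    _ ≤ M * (((1 + |y|) * (1 + |z|)) * ((1 + |y|) * (1 + |z|))) * (‖q y‖ * ‖w‖) := by
        gcongr
    _ = M * ((1 + |y|) ^ 2 * ‖q y‖ * ((1 + |z|) ^ 2 * ‖w‖)) := by ring

lemma tendsto_integral_Eker_mul (hq : HasMoment 2 q) (hm : IsJostFamily q m)
    (hqm : ∫ y, q y * m y 0 = 0) :
    Tendsto (fun k => ∫ p : ℝ × ℝ, Eker k (p.1 - p.2)⁺ * ((q p.1 * m p.1 k) * (q p.2 * m p.2 0)))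
      (𝓝 0) (𝓝 (-(jostLimit q (m · 0) - 1) ^ 2 / 2)) := by
  have hg := (hm 0).hasMoment hq
  have hlim : ∫ p : ℝ × ℝ, (((p.1 - p.2)⁺ : ℝ) : ℂ) ^ 2 / 2 *
      ((q p.1 * m p.1 0) * (q p.2 * m p.2 0)) = -(jostLimit q (m · 0) - 1) ^ 2 / 2 := by
    simp only [div_mul_eq_mul_div]
    rw [integral_div, hg.integral_prod_posPart_sub_sq_mul hqm, jostLimit, add_sub_cancel_left]
  rw [← hlim]
  refine tendsto_integral_filter_of_dominated_convergence _
    (Eventually.of_forall fun k => ?_)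
    (Eventually.of_forall fun k => ae_of_all _ fun p =>
      hm.norm_Eker_mul_le (hq.mono one_le_two) k p.1 p.2 _)
    ((hq.integrable_weight_mul_norm.mul_prod hg.integrable_weight_mul_norm).const_mul _)
    (ae_of_all _ fun p => ?_)
  · exact (((hm k).hasMoment hq).integrable_prod_posPart_mul hg (continuous_Eker k)
      (norm_Eker_le k)).aestronglyMeasurable
  · exact (tendsto_Eker _).mul (((hm.tendsto hq p.1).const_mul _).mul_const _)

theorem tendsto_inv_mul_integral (hq : HasMoment 2 q) (hm : IsJostFamily q m)
    (hqm : ∫ y, q y * m y 0 = 0) :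
    Tendsto (fun k : ℝ => (2 * Complex.I * k)⁻¹ * ∫ y, q y * m y k) (𝓝[≠] 0)
      (𝓝 (-(jostLimit q (m · 0) - 1) ^ 2 / (2 * jostLimit q (m · 0)))) := by
  set a := jostLimit q (m · 0) with ha_def
  have ha : a ≠ 0 := (hm 0).jostLimit_ne_zero (hq.mono one_le_two) hqm
  have hlim := ((hm.tendsto_integral_Eker_mul hq hqm).mono_left
    (nhdsWithin_le_nhds (s := {0}ᶜ))).const_mul a⁻¹
  rw [← ha_def, show a⁻¹ * (-(a - 1) ^ 2 / 2) = -(a - 1) ^ 2 / (2 * a) by field_simp] at hlim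
  refine hlim.congr' ?_
  filter_upwards [self_mem_nhdsWithin] with k hk
  rw [eq_inv_mul_iff_mul_eq₀ (two_I_mul_ne_zero hk), mul_left_comm,
    ← hm.jostLimit_mul_integral (hq.mono one_le_two) hqm, inv_mul_cancel_left₀ ha]

lemma tendsto_integral_Dker_mul (hq : HasMoment 2 q) (hm : IsJostFamily q m) :
    Tendsto (fun k => ∫ y, Dker k y * (q y * m y k)) (𝓝 0)
      (𝓝 (jostLimit q (m · 0) - 1)) := by
  rw [jostLimit, add_sub_cancel_left]
  set M := Real.exp (∫ y, (1 + |y|) * ‖q y‖)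
  refine tendsto_integral_filter_of_dominated_convergence
    (fun y => M * ((1 + |y|) ^ 2 * ‖q y‖))
    (Eventually.of_forall fun k => (continuous_Dker k).aestronglyMeasurable.mul
      (hm k).aestronglyMeasurable_mul)
    (Eventually.of_forall fun k => ae_of_all _ fun y => ?_)
    (hq.integrable_weight_mul_norm.const_mul M)
    (ae_of_all _ fun y => (tendsto_Dker y).mul ((hm.tendsto hq y).const_mul _))
  calc ‖Dker k y * (q y * m y k)‖ ≤ |y| * (‖q y‖ * (M * (1 + y⁻))) := by
        rw [norm_mul, norm_mul]
        grw [norm_Dker_le, hm.norm_le (hq.mono one_le_two)]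
    _ ≤ (1 + |y|) * (‖q y‖ * (M * (1 + |y|))) := by
        gcongr
        · simp
        · exact negPart_le_abs y
    _ = M * ((1 + |y|) ^ 2 * ‖q y‖) := by ring

theorem tendsto_inv_mul_integral_exp (hq : HasMoment 2 q) (hm : IsJostFamily q m)
    (hqm : ∫ y, q y * m y 0 = 0) :
    Tendsto (fun k : ℝ => (2 * Complex.I * k)⁻¹ *
        ∫ y : ℝ, Complex.exp (2 * Complex.I * k * y) * (q y * m y k)) (𝓝[≠] 0)
      (𝓝 ((jostLimit q (m · 0) ^ 2 - 1) / (2 * jostLimit q (m · 0)))) := by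
  set a := jostLimit q (m · 0) with ha_def
  have ha : a ≠ 0 := (hm 0).jostLimit_ne_zero (hq.mono one_le_two) hqm
  have hlim := (hm.tendsto_inv_mul_integral hq hqm).add
    ((hm.tendsto_integral_Dker_mul hq).mono_left nhdsWithin_le_nhds)
  rw [← ha_def, show -(a - 1) ^ 2 / (2 * a) + (a - 1) = (a ^ 2 - 1) / (2 * a) by
    field_simp; ring] at hlim
  refine hlim.congr' ?_
  filter_upwards [self_mem_nhdsWithin] with k hk
  have hg := (hm k).hasMoment (hq.mono one_le_two)
  have hDint : Integrable fun y => Dker k y * (q y * m y k) :=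
    hg.integrable_mul (continuous_Dker k).aestronglyMeasurable (B := 1) fun y =>
      (norm_Dker_le k y).trans (by simp)
  have hexp (y : ℝ) : Complex.exp (2 * Complex.I * k * y) * (q y * m y k) =
      q y * m y k + 2 * Complex.I * k * (Dker k y * (q y * m y k)) := by
    rw [← sub_add_cancel (Complex.exp _) 1, ← two_I_mul_mul_Dker]
    ring
  simp only [hexp]
  rw [integral_add hg.integrable (hDint.const_mul _), integral_const_mul, mul_add,
    inv_mul_cancel_left₀ (two_I_mul_ne_zero hk)]

end IsJostFamily

end LowEnergy

section Scattering

variable {V : ℝ → ℝ} {mp mm : ℝ → ℝ → ℂ} {a : ℝ}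

lemma hasMoment_two_of_integrable_jap_sq_mul (hV : AEStronglyMeasurable V)
    (hVint : Integrable fun y => jap y ^ 2 * |V y|) : HasMoment 2 fun y => (V y : ℂ) := by
  have hVC : AEStronglyMeasurable fun y => (V y : ℂ) :=
    Complex.continuous_ofReal.comp_aestronglyMeasurable hV
  refine (hVint.const_mul 2).mono'
    ((by fun_prop : Continuous fun y : ℝ => (1 + |y|) ^ 2).aestronglyMeasurable.smul hVC)
    (ae_of_all _ fun y => ?_)
  have hweight : (1 + |y|) ^ 2 ≤ 2 * jap y ^ 2 := by
    rw [jap, Real.sq_sqrt (by positivity), ← sq_abs y]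
    nlinarith [sq_nonneg (1 - |y|)]
  rw [norm_smul, Complex.norm_real, Real.norm_of_nonneg (by positivity), Real.norm_eq_abs,
    ← mul_assoc]
  exact mul_le_mul_of_nonneg_right hweight (abs_nonneg _)

lemma IsJostPlus.isJostFamily (hV : AEStronglyMeasurable fun y => (V y : ℂ))
    (hmp : IsJostPlus V mp) : IsJostFamily (fun y => (V y : ℂ)) mp := fun k =>
  .of_eq_add_setIntegral hV aestronglyMeasurable_const (hmp k).1 fun x => by
    simpa only [mul_assoc, Pi.one_apply] using (hmp k).2 x

lemma IsJostMinus.isJostFamily_comp_neg (hV : AEStronglyMeasurable fun y => (V (-y) : ℂ))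
    (hmm : IsJostMinus V mm) :
    IsJostFamily (fun y => (V (-y) : ℂ)) fun x k => mm (-x) k := fun k =>
  .of_eq_add_setIntegral hV aestronglyMeasurable_const
    (have ⟨C, hC⟩ := (hmm k).1; ⟨C, fun x => hC (-x)⟩) fun x => by
    have heq := (hmm k).2 (-x)
    rw [← integral_comp_neg_Ioi] at heq
    simpa only [sub_neg_eq_add, neg_add_eq_sub, mul_assoc, Pi.one_apply] using heq

section Plus

variable (hV : HasMoment 2 fun y => (V y : ℂ)) (hmp : IsJostFamily (fun y => (V y : ℂ)) mp)
  (hng : ∫ y, (V y : ℂ) * mp y 0 = 0) (ha : (a : ℂ) = jostLimit (fun y => (V y : ℂ)) (mp · 0))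
include hV hmp hng ha

lemma ne_zero_of_ofReal_eq_jostLimit : a ≠ 0 := by
  rw [← Complex.ofReal_ne_zero, ha]
  exact (hmp 0).jostLimit_ne_zero (hV.mono one_le_two) hng

theorem tendsto_Tcoef :
    Tendsto (Tcoef V mp) (𝓝[≠] 0) (𝓝 ((2 * a / (1 + a ^ 2) : ℝ) : ℂ)) := by
  have ha0 : (a : ℂ) ≠ 0 := mod_cast ne_zero_of_ofReal_eq_jostLimit hV hmp hng ha
  have hden : (1 + a ^ 2 : ℂ) ≠ 0 := mod_cast (by positivity : 1 + a ^ 2 ≠ 0)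
  have hTinv : Tendsto (Tinv V mp) (𝓝[≠] 0) (𝓝 (1 - -(a - 1) ^ 2 / (2 * a))) := by
    rw [ha]
    exact (hmp.tendsto_inv_mul_integral hV hng).const_sub 1
  have hlim : (1 - -(a - 1) ^ 2 / (2 * a) : ℂ) = (1 + a ^ 2) / (2 * a) := by
    field_simp
    ring
  rw [hlim] at hTinv
  push_cast
  rw [← inv_div]
  exact hTinv.inv₀ (by simp [ha0, hden])

theorem tendsto_Rm :
    Tendsto (Rm V mp mm) (𝓝[≠] 0) (𝓝 (((a ^ 2 - 1) / (1 + a ^ 2) : ℝ) : ℂ)) := by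
  have ha0 := ne_zero_of_ofReal_eq_jostLimit hV hmp hng ha
  have hexp := hmp.tendsto_inv_mul_integral_exp hV hng
  simp only [← ha, ← mul_assoc (Complex.exp _)] at hexp
  have hval : (a ^ 2 - 1) / (1 + a ^ 2) = 2 * a / (1 + a ^ 2) * ((a ^ 2 - 1) / (2 * a)) := by
    field_simp
  rw [hval, Complex.ofReal_mul]
  exact (tendsto_Tcoef hV hmp hng ha).mul (by exact_mod_cast hexp)

theorem tendsto_Rp (hmm : IsJostFamily (fun y => (V (-y) : ℂ)) fun x k => mm (-x) k) :
    Tendsto (Rp V mp mm) (𝓝[≠] 0) (𝓝 (((1 - a ^ 2) / (1 + a ^ 2) : ℝ) : ℂ)) := by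
  have hV1 := hV.mono one_le_two
  have ha0 := ne_zero_of_ofReal_eq_jostLimit hV hmp hng ha
  have hexp := hmm.tendsto_inv_mul_integral_exp hV.comp_neg
    ((hmp 0).integral_comp_neg_mul_eq_zero hV1 hng (hmm 0))
  rw [(hmp 0).jostLimit_comp_neg hV1 hng (hmm 0), ← ha] at hexp
  have hreflect (k : ℝ) :
      ∫ y : ℝ, Complex.exp (-2 * Complex.I * k * y) * (V y : ℂ) * mm y k =
        ∫ y : ℝ, Complex.exp (2 * Complex.I * k * y) * ((V (-y) : ℂ) * mm (-y) k) := by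
    rw [← integral_neg_eq_self]
    simp [mul_assoc]
  simp only [← hreflect] at hexp
  have hval : (1 - a ^ 2) / (1 + a ^ 2) =
      2 * a / (1 + a ^ 2) * ((a⁻¹ ^ 2 - 1) / (2 * a⁻¹)) := by
    field_simp
  rw [hval, Complex.ofReal_mul]
  exact (tendsto_Tcoef hV hmp hng ha).mul (by exact_mod_cast hexp)

end Plus

end Scattering

/-- Low-energy scattering for a non-generic potential: `m₊(·,0)` has a nonzero real limit `a`
at `−∞`, and `T(k) → 2a/(1+a²)`, `R₊(k) → (1−a²)/(1+a²)`, `R₋(k) → (a²−1)/(1+a²)` as `k → 0`. -/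
theorem statement_16 (V : ℝ → ℝ) (hVmeas : Measurable V)
    (hVint : Integrable (fun y : ℝ => jap y ^ 2 * |V y|))
    (mp mm : ℝ → ℝ → ℂ) (hmp : IsJostPlus V mp) (hmm : IsJostMinus V mm)
    (hng : (∫ y : ℝ, (V y : ℂ) * mp y 0) = 0) :
    ∃ a : ℝ, a ≠ 0 ∧ Tendsto (fun x : ℝ => mp x 0) atBot (𝓝 ((a : ℝ) : ℂ)) ∧
      Tendsto (Tcoef V mp) (𝓝[≠] (0:ℝ)) (𝓝 (((2 * a / (1 + a ^ 2) : ℝ) : ℂ))) ∧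
      Tendsto (Rp V mp mm) (𝓝[≠] (0:ℝ)) (𝓝 ((((1 - a ^ 2) / (1 + a ^ 2) : ℝ) : ℂ))) ∧
      Tendsto (Rm V mp mm) (𝓝[≠] (0:ℝ)) (𝓝 ((((a ^ 2 - 1) / (1 + a ^ 2) : ℝ) : ℂ))) := by
  have hV := hasMoment_two_of_integrable_jap_sq_mul hVmeas.aestronglyMeasurable hVint
  have hV1 := hV.mono one_le_two
  have hJp := hmp.isJostFamily hV.aestronglyMeasurable
  have hJm := hmm.isJostFamily_comp_neg hV.comp_neg.aestronglyMeasurable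
  obtain ⟨a, ha⟩ := (hJp 0).exists_ofReal_eq_jostLimit hV1 (fun y => Complex.conj_ofReal _)
  refine ⟨a, ne_zero_of_ofReal_eq_jostLimit hV hJp hng ha, ?_, tendsto_Tcoef hV hJp hng ha,
    tendsto_Rp hV hJp hng ha hJm, tendsto_Rm hV hJp hng ha⟩
  rw [ha]
  exact (hJp 0).tendsto_atBot hV1 hng
end

section
/- Let s ≥ 0 and assume ∫⟨y⟩^{s+1}|V(y)|dy < ∞, that V is non-generic (∫_ℝ V(y) m₊(y,0) dy = 0), and that the map x ↦ m₊(x,0) is odd. Then for every r ∈ {1,2,3,4} there exists C > 0 such that for α ∈ {0,1}: | ∂_x^α ( m₊(x,0)^r − 1 ) | ≤ C ⟨x⟩^{−s} W₊^{s+1}(x) for all x ≥ −1, and | ∂_x^α ( m₊(x,0)^r − (−1)^r ) | ≤ C ⟨x⟩^{−s} W₋^{s+1}(x) for all x ≤ 1. -/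
open MeasureTheory Filter Topology Set

/-- `W₊^s(x) = ∫_x^∞ ⟨y⟩^s |V(y)| dy`. -/
noncomputable def Wplus (V : ℝ → ℝ) (s x : ℝ) : ℝ :=
  ∫ y in Set.Ioi x, jap y ^ s * |V y|

/-- `W₋^s(x) = ∫_{−∞}^x ⟨y⟩^s |V(y)| dy`. -/
noncomputable def Wminus (V : ℝ → ℝ) (s x : ℝ) : ℝ :=
  ∫ y in Set.Iic x, jap y ^ s * |V y|

/-!
Write `m = m₊(·, 0)`. The Volterra equation gives `m(x) - 1 = ∫_x^∞ (y - x) V m` and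
`m'(x) = -∫_x^∞ V m`. Since `m` is bounded, `x m'(x)` is bounded near `-∞`, so `∫ V m = 0` and both
integrals can be rewritten over `(-∞, x]`; this gives `m' = ∫_{-∞}^x V m` and a limit `c` of `m` at
`-∞` with `m(x) - c = -∫_{-∞}^x (y - x) V m`. On either half-line the kernels `|y - x|` and `1`
are at most `2⟨y⟩ ≤ 2^{s+1} ⟨x⟩^{-s} ⟨y⟩^{s+1}`, because `|x| ≤ ⟨y⟩` there. Powers cost a factor
`r ‖m‖_∞^{r-1}`, and `c = -1` for odd `m` since `m → 1` at `+∞`.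
-/

section JapaneseBracket

variable {x y s : ℝ}

lemma one_le_jap (x : ℝ) : 1 ≤ jap x := by
  rw [jap, Real.one_le_sqrt]
  exact le_add_of_nonneg_right (sq_nonneg x)

lemma jap_pos (x : ℝ) : 0 < jap x := one_pos.trans_le (one_le_jap x)

lemma jap_rpow_nonneg (s x : ℝ) : 0 ≤ jap x ^ s := Real.rpow_nonneg (jap_pos x).le s

lemma abs_le_jap (x : ℝ) : |x| ≤ jap x := Real.abs_le_sqrt (by linarith)

lemma continuous_jap : Continuous jap := by
  unfold jap
  fun_prop

lemma abs_le_jap_of_neg_one_le (hx : -1 ≤ x) (hxy : x ≤ y) : |x| ≤ jap y :=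
  abs_le.2 ⟨by linarith [one_le_jap y], hxy.trans ((le_abs_self y).trans (abs_le_jap y))⟩

lemma abs_le_jap_of_le_one (hx : x ≤ 1) (hyx : y ≤ x) : |x| ≤ jap y :=
  abs_le.2 ⟨by linarith [neg_abs_le y, abs_le_jap y], hx.trans (one_le_jap y)⟩

lemma jap_le_two_mul_jap (h : |x| ≤ jap y) : jap x ≤ 2 * jap y := by
  have hsq : x ^ 2 ≤ jap y ^ 2 := sq_le_sq.2 (h.trans (le_abs_self _))
  have hone : 1 ≤ jap y ^ 2 := one_le_pow₀ (one_le_jap y)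
  refine Real.sqrt_le_iff.2 ⟨by linarith [jap_pos y], ?_⟩
  linarith

lemma abs_sub_le_two_mul_jap (h : |x| ≤ jap y) : |y - x| ≤ 2 * jap y := by
  linarith [abs_sub y x, abs_le_jap y]

lemma two_mul_jap_le (hs : 0 ≤ s) (h : |x| ≤ jap y) :
    2 * jap y ≤ 2 ^ (s + 1) * jap x ^ (-s) * jap y ^ (s + 1) := by
  have hx : 0 < jap x ^ s := Real.rpow_pos_of_pos (jap_pos x) s
  have hy : 0 < 2 * jap y := by linarith [jap_pos y]
  have hpow : jap x ^ s ≤ (2 * jap y) ^ s :=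
    Real.rpow_le_rpow (jap_pos x).le (jap_le_two_mul_jap h) hs
  calc 2 * jap y = jap x ^ (-s) * jap x ^ s * (2 * jap y) := by
        rw [Real.rpow_neg (jap_pos x).le, inv_mul_cancel₀ hx.ne', one_mul]
    _ ≤ jap x ^ (-s) * (2 * jap y) ^ s * (2 * jap y) := by
        gcongr
        exact jap_rpow_nonneg (-s) x
    _ = 2 ^ (s + 1) * jap x ^ (-s) * jap y ^ (s + 1) := by
        rw [mul_assoc, ← Real.rpow_add_one hy.ne', Real.mul_rpow zero_le_two (jap_pos y).le]
        ring

lemma integrable_jap_mul_abs {V : ℝ → ℝ} (hs : 0 ≤ s)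
    (hV : Integrable fun y => jap y ^ (s + 1) * |V y|) :
    Integrable fun y => jap y * |V y| := by
  have hcont : Continuous fun y => jap y ^ (-s) :=
    continuous_jap.rpow_const fun y => Or.inl (jap_pos y).ne'
  have hle : ∀ y, ‖jap y ^ (-s)‖ ≤ 1 := fun y => by
    rw [Real.norm_of_nonneg (jap_rpow_nonneg (-s) y)]
    exact Real.rpow_le_one_of_one_le_of_nonpos (one_le_jap y) (neg_nonpos.2 hs)
  refine (hV.bdd_mul hcont.aestronglyMeasurable (ae_of_all _ hle)).congr (ae_of_all _ fun y => ?_)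
  dsimp only
  rw [← mul_assoc, ← Real.rpow_add (jap_pos y), neg_add_cancel_left, Real.rpow_one]

end JapaneseBracket

lemma norm_pow_sub_pow_le {R : Type*} [NormedCommRing R] [NormOneClass R] {a b : R} {M : ℝ}
    (ha : ‖a‖ ≤ M) (hb : ‖b‖ ≤ M) (n : ℕ) :
    ‖a ^ n - b ^ n‖ ≤ n * M ^ (n - 1) * ‖a - b‖ := by
  have hterm : ∀ i ∈ Finset.range n, ‖a ^ i * b ^ (n - 1 - i)‖ ≤ M ^ (n - 1) := fun i hi =>
    calc ‖a ^ i * b ^ (n - 1 - i)‖ ≤ ‖a‖ ^ i * ‖b‖ ^ (n - 1 - i) :=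
          (norm_mul_le _ _).trans (by gcongr <;> exact norm_pow_le _ _)
      _ ≤ M ^ i * M ^ (n - 1 - i) := by
          have hM : 0 ≤ M := (norm_nonneg a).trans ha
          gcongr
      _ = M ^ (n - 1) := by
          rw [← pow_add, Nat.add_sub_of_le (Nat.le_sub_one_of_lt (Finset.mem_range.1 hi))]
  rw [← (Commute.all a b).geom_sum₂_mul]
  refine (norm_mul_le _ _).trans (mul_le_mul_of_nonneg_right ?_ (norm_nonneg _))
  simpa using norm_sum_le_of_le _ hterm

lemma norm_deriv_pow_le {𝕜 : Type*} [NontriviallyNormedField 𝕜] {R : Type*} [NormedCommRing R]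
    [NormOneClass R] [NormedAlgebra 𝕜 R] {f : 𝕜 → R} {x : 𝕜} {M : ℝ}
    (hf : DifferentiableAt 𝕜 f x) (hM : ‖f x‖ ≤ M) (n : ℕ) :
    ‖deriv (fun z => f z ^ n) x‖ ≤ n * M ^ (n - 1) * ‖deriv f x‖ := by
  rw [(hf.hasDerivAt.fun_pow n).deriv]
  refine (norm_mul_le _ _).trans (mul_le_mul_of_nonneg_right ?_ (norm_nonneg _))
  refine (norm_mul_le _ _).trans ?_
  gcongr
  · simpa using Nat.norm_cast_le (α := R) n
  · exact (norm_pow_le _ _).trans (by gcongr)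

lemma aestronglyMeasurable_restrict_of_forall_Ioi {α E : Type*} [LinearOrder α]
    [TopologicalSpace α] [ClosedIicTopology α] [SecondCountableTopology α] [MeasurableSpace α]
    [TopologicalSpace E] [TopologicalSpace.PseudoMetrizableSpace E] {f : α → E} {μ : Measure α}
    [NullSingletonClass μ] {A : Set α}
    (h : ∀ a ∈ A, AEStronglyMeasurable f (μ.restrict (Ioi a))) :
    AEStronglyMeasurable f (μ.restrict A) := by
  set U : Set α := ⋃ a : A, Ioi (a : α)
  have hU : AEStronglyMeasurable f (μ.restrict U) := by
    obtain ⟨T, hTc, hT⟩ := TopologicalSpace.isOpen_iUnion_countable (fun a : A => Ioi (a : α))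
      fun _ => isOpen_Ioi
    have := hTc.to_subtype
    rw [show U = ⋃ a ∈ T, Ioi (a : α) from hT.symm, biUnion_eq_iUnion,
      aestronglyMeasurable_iUnion_iff]
    exact fun a => h a.1 a.1.2
  -- A point of `A` outside `U` is a least element of `A`.
  have hleast : (A \ U).Subsingleton := fun a ha b hb =>
    le_antisymm (not_lt.1 fun hba => ha.2 (mem_iUnion.2 ⟨⟨b, hb.1⟩, hba⟩))
      (not_lt.1 fun hab => hb.2 (mem_iUnion.2 ⟨⟨a, ha.1⟩, hab⟩))
  have hnull : AEStronglyMeasurable f (μ.restrict (A \ U)) := by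
    rw [Measure.restrict_eq_zero.2 (hleast.measure_zero μ)]
    exact aestronglyMeasurable_zero_measure f
  exact (aestronglyMeasurable_union_iff.2 ⟨hU, hnull⟩).mono_set (by simp)

section FirstMoment

variable {E : Type*} [NormedAddCommGroup E] [NormedSpace ℝ E] {f : ℝ → E}

lemma integrable_sub_smul {μ : Measure ℝ} (hf : Integrable f μ)
    (hyf : Integrable (fun y => y • f y) μ) (x : ℝ) :
    Integrable (fun y => (y - x) • f y) μ := by
  simp only [sub_smul]
  exact hyf.sub (hf.smul x)

lemma setIntegral_sub_smul {μ : Measure ℝ} (hf : Integrable f μ)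
    (hyf : Integrable (fun y => y • f y) μ) (S : Set ℝ) (x : ℝ) :
    ∫ y in S, (y - x) • f y ∂μ = ∫ y in S, y • f y ∂μ - x • ∫ y in S, f y ∂μ := by
  simp only [sub_smul, ← integral_smul]
  exact integral_sub hyf.integrableOn (hf.smul x).integrableOn

lemma hasDerivAt_max_sub_zero {x y : ℝ} (h : y ≠ x) :
    HasDerivAt (fun z => max (y - z) 0) ((Ioi x).indicator (fun _ => -1) y) x := by
  rcases h.lt_or_gt with hlt | hgt
  · rw [indicator_of_notMem (notMem_Ioi.2 hlt.le)]
    refine (hasDerivAt_const x 0).congr_of_eventuallyEq ?_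
    filter_upwards [lt_mem_nhds hlt] with z hz
    exact max_eq_right (by linarith)
  · rw [indicator_of_mem (mem_Ioi.2 hgt)]
    refine ((hasDerivAt_id x).const_sub y).congr_of_eventuallyEq ?_
    filter_upwards [gt_mem_nhds hgt] with z hz
    exact max_eq_left (by simpa using hz.le)

lemma setIntegral_Ioi_sub_smul_eq (f : ℝ → E) (x : ℝ) :
    ∫ y in Ioi x, (y - x) • f y = ∫ y, max (y - x) 0 • f y := by
  rw [← integral_indicator measurableSet_Ioi]
  congr 1 with y
  rcases lt_or_ge x y with h | h
  · rw [indicator_of_mem (mem_Ioi.2 h), max_eq_left (by linarith)]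
  · rw [indicator_of_notMem (notMem_Ioi.2 h), max_eq_right (by linarith), zero_smul]

lemma hasDerivAt_setIntegral_Ioi_sub_smul (hf : Integrable f)
    (hyf : Integrable fun y => y • f y) (x : ℝ) :
    HasDerivAt (fun z => ∫ y in Ioi z, (y - z) • f y) (-∫ y in Ioi x, f y) x := by
  have hmeas : ∀ z : ℝ, AEStronglyMeasurable fun y => max (y - z) 0 • f y := fun z =>
    (by fun_prop : Continuous fun y : ℝ => max (y - z) 0).aestronglyMeasurable.smul hf.1
  have hint : Integrable fun y => max (y - x) 0 • f y := by
    refine (integrable_sub_smul hf hyf x).mono (hmeas x) (ae_of_all _ fun y => ?_)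
    simp only [norm_smul, Real.norm_eq_abs]
    refine mul_le_mul_of_nonneg_right ?_ (norm_nonneg _)
    rw [abs_of_nonneg (le_max_right _ _)]
    exact max_le (le_abs_self _) (abs_nonneg _)
  have hlip : ∀ y, LipschitzOnWith (Real.nnabs ‖f y‖) (fun z => max (y - z) 0 • f y) univ := by
    refine fun y => LipschitzOnWith.of_dist_le_mul fun a _ b _ => ?_
    rw [dist_eq_norm, ← sub_smul, norm_smul, Real.coe_nnabs, abs_norm, mul_comm, dist_comm,
      Real.dist_eq]
    gcongr
    simpa using abs_max_sub_max_le_abs (y - a) (y - b) 0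
  have hderiv : ∀ᵐ y, HasDerivAt (fun z => max (y - z) 0 • f y)
      ((Ioi x).indicator (fun y => -f y) y) x := by
    filter_upwards [Measure.ae_ne volume x] with y hy
    simpa [indicator_apply, ite_smul] using (hasDerivAt_max_sub_zero hy).smul_const (f y)
  have key := (hasDerivAt_integral_of_dominated_loc_of_lip univ_mem
    (Eventually.of_forall hmeas) hint (hf.1.neg.indicator measurableSet_Ioi)
    (ae_of_all _ hlip) hf.norm hderiv).2
  rw [integral_indicator measurableSet_Ioi, integral_neg'] at key
  simpa only [setIntegral_Ioi_sub_smul_eq] using key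

end FirstMoment

lemma norm_setIntegral_smul_le {V g : ℝ → ℝ} {m : ℝ → ℂ} {s x M : ℝ} {S : Set ℝ}
    (hS : MeasurableSet S) (hs : 0 ≤ s) (hV : Integrable fun y => jap y ^ (s + 1) * |V y|)
    (hM : ∀ y, ‖m y‖ ≤ M) (hx : ∀ y ∈ S, |x| ≤ jap y) (hg : ∀ y ∈ S, |g y| ≤ 2 * jap y) :
    ‖∫ y in S, g y • (V y * m y : ℂ)‖ ≤
      2 ^ (s + 1) * M * jap x ^ (-s) * ∫ y in S, jap y ^ (s + 1) * |V y| := by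
  rw [← integral_const_mul]
  refine norm_integral_le_of_norm_le (hV.integrableOn.const_mul _) ?_
  filter_upwards [ae_restrict_mem hS] with y hy
  calc ‖g y • (V y * m y : ℂ)‖ = |g y| * (|V y| * ‖m y‖) := by
        rw [norm_smul, norm_mul, Complex.norm_real, Real.norm_eq_abs, Real.norm_eq_abs]
    _ ≤ 2 ^ (s + 1) * jap x ^ (-s) * jap y ^ (s + 1) * (|V y| * M) := by
        have hgy := (hg y hy).trans (two_mul_jap_le hs (hx y hy))
        have := hM y
        gcongr
        exact (abs_nonneg _).trans hgy
    _ = 2 ^ (s + 1) * M * jap x ^ (-s) * (jap y ^ (s + 1) * |V y|) := by ring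

/-- `m` is a zero-energy Jost solution `m₊(·, 0)` of the potential `V`: a function bounded on the
whole line that solves the Volterra equation with kernel `D₀(y - x) = y - x`, written here as a
real scalar acting on `ℂ`. -/
structure IsZeroEnergyJost (V : ℝ → ℝ) (m : ℝ → ℂ) : Prop where
  bounded : ∃ M, ∀ x, ‖m x‖ ≤ M
  eq_one_add : ∀ x, m x = 1 + ∫ y in Ioi x, (y - x) • (V y * m y : ℂ)

/-- The limit at `-∞` of a zero-energy Jost solution `m` of `V`, expressed through the first moment
of `V * m`. -/
noncomputable def jostLeftLimit (V : ℝ → ℝ) (m : ℝ → ℂ) : ℂ := 1 + ∫ y, y • (V y * m y : ℂ)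

lemma IsJostPlus.isZeroEnergyJost {V : ℝ → ℝ} {m : ℝ → ℝ → ℂ} (h : IsJostPlus V m) :
    IsZeroEnergyJost V fun x => m x 0 where
  bounded := (h 0).1
  eq_one_add x := by simpa [Dker, mul_assoc] using (h 0).2 x

namespace IsZeroEnergyJost

variable {V : ℝ → ℝ} {m : ℝ → ℂ} {c : ℂ} {s x M : ℝ}

/- At a point `x` where `V * m` is not a.e.-measurable on `(x, ∞)`, the integral in the Volterra
equation has the junk value `0`, so `m x = 1`; these points form a lower set. -/
lemma aestronglyMeasurable_mul (hm : IsZeroEnergyJost V m) (hV : AEStronglyMeasurable V) :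
    AEStronglyMeasurable fun y => (V y * m y : ℂ) := by
  set A : Set ℝ := {x | AEStronglyMeasurable (fun y => (V y * m y : ℂ)) (volume.restrict (Ioi x))}
  have hA : MeasurableSet A := by
    have hupper : IsUpperSet A := fun a b hab ha => ha.mono_set (Ioi_subset_Ioi hab)
    exact hupper.ordConnected.measurableSet
  have hone : ∀ x ∉ A, m x = 1 := by
    intro x hx
    rw [hm.eq_one_add x, integral_undef, add_zero]
    refine fun hint => hx ?_
    have hinv : AEStronglyMeasurable (fun y => (y - x)⁻¹ • (y - x) • (V y * m y : ℂ))
        (volume.restrict (Ioi x)) :=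
      (by fun_prop : Measurable fun y : ℝ => (y - x)⁻¹).aestronglyMeasurable.smul hint.1
    refine hinv.congr ?_
    filter_upwards [ae_restrict_mem measurableSet_Ioi] with y hy
    exact inv_smul_smul₀ (sub_pos.2 hy).ne' _
  have hAc : AEStronglyMeasurable (fun y => (V y * m y : ℂ)) (volume.restrict Aᶜ) := by
    refine (Complex.continuous_ofReal.comp_aestronglyMeasurable hV.restrict).congr ?_
    filter_upwards [ae_restrict_mem hA.compl] with y hy
    rw [hone y hy, mul_one]
  have hAA : AEStronglyMeasurable (fun y => (V y * m y : ℂ)) (volume.restrict A) :=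
    aestronglyMeasurable_restrict_of_forall_Ioi fun _ ha => ha
  rw [← Measure.restrict_univ (μ := volume), ← union_compl_self A]
  exact aestronglyMeasurable_union_iff.2 ⟨hAA, hAc⟩

lemma integrable_smul_mul (hm : IsZeroEnergyJost V m) (hV : AEStronglyMeasurable V)
    (hVint : Integrable fun y => jap y * |V y|) {g : ℝ → ℝ} (hg : Continuous g)
    (hgle : ∀ y, |g y| ≤ jap y) : Integrable fun y => g y • (V y * m y : ℂ) := by
  obtain ⟨M, hM⟩ := hm.bounded
  refine (hVint.mul_const M).mono'
    (hg.aestronglyMeasurable.smul (hm.aestronglyMeasurable_mul hV)) (ae_of_all _ fun y => ?_)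
  rw [norm_smul, norm_mul, Complex.norm_real, Real.norm_eq_abs, Real.norm_eq_abs, ← mul_assoc]
  gcongr
  · exact mul_nonneg (jap_pos y).le (abs_nonneg _)
  · exact hgle y
  · exact hM y

lemma integrable_mul (hm : IsZeroEnergyJost V m) (hV : AEStronglyMeasurable V)
    (hVint : Integrable fun y => jap y * |V y|) : Integrable fun y => (V y * m y : ℂ) := by
  simpa using hm.integrable_smul_mul hV hVint (g := fun _ => 1) continuous_const
    (by simpa using one_le_jap)

lemma integrable_id_smul_mul (hm : IsZeroEnergyJost V m) (hV : AEStronglyMeasurable V)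
    (hVint : Integrable fun y => jap y * |V y|) : Integrable fun y => y • (V y * m y : ℂ) :=
  hm.integrable_smul_mul hV hVint continuous_id abs_le_jap

lemma hasDerivAt (hm : IsZeroEnergyJost V m) (hV : AEStronglyMeasurable V)
    (hVint : Integrable fun y => jap y * |V y|) (x : ℝ) :
    HasDerivAt m (-∫ y in Ioi x, (V y * m y : ℂ)) x :=
  ((hasDerivAt_setIntegral_Ioi_sub_smul (hm.integrable_mul hV hVint)
    (hm.integrable_id_smul_mul hV hVint) x).const_add 1).congr_of_eventuallyEq
      (Eventually.of_forall hm.eq_one_add)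

/- Up to a bounded term, the Volterra equation says `m x = -x • ∫_x^∞ V m`, so a bounded `m` forces
the integral to vanish as `x → -∞`. -/
lemma integral_mul_eq_zero (hm : IsZeroEnergyJost V m) (hV : AEStronglyMeasurable V)
    (hVint : Integrable fun y => jap y * |V y|) : ∫ y, (V y * m y : ℂ) = 0 := by
  have hf := hm.integrable_mul hV hVint
  have hyf := hm.integrable_id_smul_mul hV hVint
  obtain ⟨M, hM⟩ := hm.bounded
  set B : ℝ := (∫ y, ‖y • (V y * m y : ℂ)‖) + (M + 1)
  have hbound : ∀ x : ℝ, |x| * ‖∫ y in Ioi x, (V y * m y : ℂ)‖ ≤ B := by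
    intro x
    have hsplit : x • ∫ y in Ioi x, (V y * m y : ℂ) =
        (∫ y in Ioi x, y • (V y * m y : ℂ)) - (m x - 1) := by
      rw [hm.eq_one_add x, add_sub_cancel_left, setIntegral_sub_smul hf hyf, sub_sub_cancel]
    rw [← Real.norm_eq_abs, ← norm_smul, hsplit]
    refine (norm_sub_le _ _).trans (add_le_add ?_ ?_)
    · exact (norm_integral_le_integral_norm _).trans
        (setIntegral_le_integral hyf.norm (ae_of_all _ fun _ => norm_nonneg _))
    · exact (norm_sub_le _ _).trans (by simpa using hM x)
  have hzero : Tendsto (fun x => ∫ y in Ioi x, (V y * m y : ℂ)) atBot (𝓝 0) := by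
    refine squeeze_zero_norm' ?_ (tendsto_abs_atBot_atTop.const_div_atTop B)
    filter_upwards [eventually_lt_atBot 0] with x hx
    rw [le_div_iff₀ (abs_pos.2 hx.ne), mul_comm]
    exact hbound x
  exact tendsto_nhds_unique
    ((aecover_Ioi tendsto_id).integral_tendsto_of_countably_generated hf) hzero

lemma hasDerivAt_Iic (hm : IsZeroEnergyJost V m) (hV : AEStronglyMeasurable V)
    (hVint : Integrable fun y => jap y * |V y|) (x : ℝ) :
    HasDerivAt m (∫ y in Iic x, (V y * m y : ℂ)) x := by
  have hf := hm.integrable_mul hV hVint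
  convert hm.hasDerivAt hV hVint x
  rw [eq_neg_iff_add_eq_zero, intervalIntegral.integral_Iic_add_Ioi hf.integrableOn hf.integrableOn,
    hm.integral_mul_eq_zero hV hVint]

lemma eq_sub (hm : IsZeroEnergyJost V m) (hV : AEStronglyMeasurable V)
    (hVint : Integrable fun y => jap y * |V y|) (x : ℝ) :
    m x = jostLeftLimit V m - ∫ y in Iic x, (y - x) • (V y * m y : ℂ) := by
  have hf := hm.integrable_mul hV hVint
  have hyf := hm.integrable_id_smul_mul hV hVint
  have hsplit := intervalIntegral.integral_Iic_add_Ioi (b := x)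
    (integrable_sub_smul hf hyf x).integrableOn (integrable_sub_smul hf hyf x).integrableOn
  have hmoment : ∫ y, (y - x) • (V y * m y : ℂ) = ∫ y, y • (V y * m y : ℂ) := by
    simpa [hm.integral_mul_eq_zero hV hVint] using setIntegral_sub_smul hf hyf univ x
  rw [hmoment] at hsplit
  rw [jostLeftLimit, ← hsplit, hm.eq_one_add x]
  ring

lemma norm_sub_one_le (hm : IsZeroEnergyJost V m) (hs : 0 ≤ s)
    (hVint : Integrable fun y => jap y ^ (s + 1) * |V y|) (hM : ∀ y, ‖m y‖ ≤ M) (hx : -1 ≤ x) :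
    ‖m x - 1‖ ≤ 2 ^ (s + 1) * M * jap x ^ (-s) * Wplus V (s + 1) x := by
  have hxy : ∀ y ∈ Ioi x, |x| ≤ jap y := fun y hy => abs_le_jap_of_neg_one_le hx (le_of_lt hy)
  rw [hm.eq_one_add x, add_sub_cancel_left]
  exact norm_setIntegral_smul_le measurableSet_Ioi hs hVint hM hxy
    fun y hy => abs_sub_le_two_mul_jap (hxy y hy)

lemma norm_deriv_le_Wplus (hm : IsZeroEnergyJost V m) (hV : AEStronglyMeasurable V) (hs : 0 ≤ s)
    (hVint : Integrable fun y => jap y ^ (s + 1) * |V y|) (hM : ∀ y, ‖m y‖ ≤ M) (hx : -1 ≤ x) :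
    ‖deriv m x‖ ≤ 2 ^ (s + 1) * M * jap x ^ (-s) * Wplus V (s + 1) x := by
  rw [(hm.hasDerivAt hV (integrable_jap_mul_abs hs hVint) x).deriv, norm_neg]
  simpa [Wplus] using norm_setIntegral_smul_le (g := fun _ => 1) measurableSet_Ioi hs hVint hM
    (fun y hy => abs_le_jap_of_neg_one_le hx (le_of_lt hy))
    fun y _ => by rw [abs_one]; linarith [one_le_jap y]

lemma norm_sub_jostLeftLimit_le (hm : IsZeroEnergyJost V m) (hV : AEStronglyMeasurable V)
    (hs : 0 ≤ s) (hVint : Integrable fun y => jap y ^ (s + 1) * |V y|) (hM : ∀ y, ‖m y‖ ≤ M)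
    (hx : x ≤ 1) :
    ‖m x - jostLeftLimit V m‖ ≤
      2 ^ (s + 1) * M * jap x ^ (-s) * Wminus V (s + 1) x := by
  have hxy : ∀ y ∈ Iic x, |x| ≤ jap y := fun y hy => abs_le_jap_of_le_one hx hy
  rw [hm.eq_sub hV (integrable_jap_mul_abs hs hVint) x, sub_sub_cancel_left, norm_neg]
  exact norm_setIntegral_smul_le measurableSet_Iic hs hVint hM hxy
    fun y hy => abs_sub_le_two_mul_jap (hxy y hy)

lemma norm_deriv_le_Wminus (hm : IsZeroEnergyJost V m) (hV : AEStronglyMeasurable V) (hs : 0 ≤ s)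
    (hVint : Integrable fun y => jap y ^ (s + 1) * |V y|) (hM : ∀ y, ‖m y‖ ≤ M) (hx : x ≤ 1) :
    ‖deriv m x‖ ≤ 2 ^ (s + 1) * M * jap x ^ (-s) * Wminus V (s + 1) x := by
  rw [(hm.hasDerivAt_Iic hV (integrable_jap_mul_abs hs hVint) x).deriv]
  simpa [Wminus] using norm_setIntegral_smul_le (g := fun _ => 1) measurableSet_Iic hs hVint hM
    (fun y hy => abs_le_jap_of_le_one hx hy)
    fun y _ => by rw [abs_one]; linarith [one_le_jap y]

lemma tendsto_atTop (hm : IsZeroEnergyJost V m) (hVint : Integrable fun y => jap y * |V y|) :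
    Tendsto m atTop (𝓝 1) := by
  obtain ⟨M, hM⟩ := hm.bounded
  have htail : Tendsto (fun x => 2 * M * ∫ y in Ioi x, jap y * |V y|) atTop (𝓝 0) := by
    simpa using (tendsto_integral_Ioi_zero tendsto_id).const_mul (2 * M)
  refine tendsto_iff_norm_sub_tendsto_zero.2 (squeeze_zero' (by simp) ?_ htail)
  filter_upwards [eventually_ge_atTop (-1)] with x hx
  simpa [Wplus] using hm.norm_sub_one_le le_rfl (by simpa using hVint) hM hx

lemma tendsto_atBot (hm : IsZeroEnergyJost V m) (hV : AEStronglyMeasurable V)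
    (hVint : Integrable fun y => jap y * |V y|) :
    Tendsto m atBot (𝓝 (jostLeftLimit V m)) := by
  obtain ⟨M, hM⟩ := hm.bounded
  have htail : Tendsto (fun x => 2 * M * ∫ y in Iic x, jap y * |V y|) atBot (𝓝 0) := by
    simpa using (tendsto_integral_Iic_zero tendsto_id).const_mul (2 * M)
  refine tendsto_iff_norm_sub_tendsto_zero.2 (squeeze_zero' (by simp) ?_ htail)
  filter_upwards [eventually_le_atBot 1] with x hx
  simpa [Wminus] using hm.norm_sub_jostLeftLimit_le hV le_rfl (by simpa using hVint) hM hx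

lemma norm_sub_le_Wminus (hm : IsZeroEnergyJost V m) (hV : AEStronglyMeasurable V) (hs : 0 ≤ s)
    (hVint : Integrable fun y => jap y ^ (s + 1) * |V y|) (hc : Tendsto m atBot (𝓝 c))
    (hM : ∀ y, ‖m y‖ ≤ M) (hx : x ≤ 1) :
    ‖m x - c‖ ≤ 2 ^ (s + 1) * M * jap x ^ (-s) * Wminus V (s + 1) x := by
  rw [tendsto_nhds_unique hc (hm.tendsto_atBot hV (integrable_jap_mul_abs hs hVint))]
  exact hm.norm_sub_jostLeftLimit_le hV hs hVint hM hx

lemma tendsto_atBot_of_odd (hm : IsZeroEnergyJost V m) (hVint : Integrable fun y => jap y * |V y|)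
    (hodd : ∀ x, m (-x) = -m x) : Tendsto m atBot (𝓝 (-1)) := by
  refine ((hm.tendsto_atTop hVint).comp tendsto_neg_atBot_atTop).neg.congr fun x => ?_
  rw [Function.comp_apply, hodd, neg_neg]

end IsZeroEnergyJost

theorem statement_19_general {V : ℝ → ℝ} (hV : AEStronglyMeasurable V) {s : ℝ} (hs : 0 ≤ s)
    (hVint : Integrable fun y => jap y ^ (s + 1) * |V y|) {m : ℝ → ℂ}
    (hm : IsZeroEnergyJost V m) {c : ℂ} (hc : Tendsto m atBot (𝓝 c)) (r : ℕ) :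
    ∃ C : ℝ, 0 < C ∧
      (∀ x, DifferentiableAt ℝ m x) ∧
      (∀ x, -1 ≤ x → ‖m x ^ r - 1‖ ≤ C * jap x ^ (-s) * Wplus V (s + 1) x) ∧
      (∀ x, -1 ≤ x → ‖deriv (fun z => m z ^ r) x‖ ≤ C * jap x ^ (-s) * Wplus V (s + 1) x) ∧
      (∀ x, x ≤ 1 → ‖m x ^ r - c ^ r‖ ≤ C * jap x ^ (-s) * Wminus V (s + 1) x) ∧
      (∀ x, x ≤ 1 → ‖deriv (fun z => m z ^ r) x‖ ≤ C * jap x ^ (-s) * Wminus V (s + 1) x) := by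
  have hVint₁ := integrable_jap_mul_abs hs hVint
  have hdiff x : DifferentiableAt ℝ m x := (hm.hasDerivAt hV hVint₁ x).differentiableAt
  obtain ⟨M, hM⟩ := hm.bounded
  have hone : ‖(1 : ℂ)‖ ≤ M := le_of_tendsto' (hm.tendsto_atTop hVint₁).norm hM
  have hcM : ‖c‖ ≤ M := le_of_tendsto' hc.norm hM
  have hM_pos : 0 < M := by linarith [norm_one (α := ℂ)]
  have combine {a x W : ℝ} {b : ℂ} (hab : a ≤ r * M ^ (r - 1) * ‖b‖)
      (hb : ‖b‖ ≤ 2 ^ (s + 1) * M * jap x ^ (-s) * W) :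
      a ≤ (r + 1) * M ^ (r - 1) * (2 ^ (s + 1) * M) * jap x ^ (-s) * W :=
    calc a ≤ (r + 1) * M ^ (r - 1) * ‖b‖ := hab.trans (by gcongr; linarith)
      _ ≤ (r + 1) * M ^ (r - 1) * (2 ^ (s + 1) * M * jap x ^ (-s) * W) := by gcongr
      _ = (r + 1) * M ^ (r - 1) * (2 ^ (s + 1) * M) * jap x ^ (-s) * W := by ring
  refine ⟨(r + 1) * M ^ (r - 1) * (2 ^ (s + 1) * M), by positivity, hdiff, fun x hx => ?_,
    fun x hx => ?_, fun x hx => ?_, fun x hx => ?_⟩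
  · exact combine (by simpa using norm_pow_sub_pow_le (hM x) hone r)
      (hm.norm_sub_one_le hs hVint hM hx)
  · exact combine (norm_deriv_pow_le (hdiff x) (hM x) r)
      (hm.norm_deriv_le_Wplus hV hs hVint hM hx)
  · exact combine (norm_pow_sub_pow_le (hM x) hcM r)
      (hm.norm_sub_le_Wminus hV hs hVint hc hM hx)
  · exact combine (norm_deriv_pow_le (hdiff x) (hM x) r)
      (hm.norm_deriv_le_Wminus hV hs hVint hM hx)

/-- Bounds for powers of the zero-energy resonance `m₊(·,0)` of a non-generic potential with
an odd resonance: for `r = 1,…,4` and `α = 0,1`,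
`|∂_x^α (m₊(x,0)^r − 1)| ≲ ⟨x⟩^{−s} W₊^{s+1}(x)` for `x ≥ −1` and
`|∂_x^α (m₊(x,0)^r − (−1)^r)| ≲ ⟨x⟩^{−s} W₋^{s+1}(x)` for `x ≤ 1`. -/
theorem statement_19 (V : ℝ → ℝ) (hVmeas : Measurable V)
    (s : ℝ) (hs : 0 ≤ s)
    (hVint : Integrable (fun y : ℝ => jap y ^ (s + 1) * |V y|))
    (mp : ℝ → ℝ → ℂ) (hmp : IsJostPlus V mp)
    (hng : (∫ y : ℝ, (V y : ℂ) * mp y 0) = 0)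
    (hodd : ∀ x : ℝ, mp (-x) 0 = - mp x 0) :
    ∀ r : ℕ, 1 ≤ r → r ≤ 4 → ∃ C : ℝ, 0 < C ∧
      (∀ x : ℝ, DifferentiableAt ℝ (fun x' => mp x' 0) x) ∧
      (∀ x : ℝ, -1 ≤ x →
        ‖mp x 0 ^ r - 1‖ ≤ C * jap x ^ (-s) * Wplus V (s + 1) x) ∧
      (∀ x : ℝ, -1 ≤ x →
        ‖deriv (fun x' => mp x' 0 ^ r) x‖ ≤ C * jap x ^ (-s) * Wplus V (s + 1) x) ∧
      (∀ x : ℝ, x ≤ 1 →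
        ‖mp x 0 ^ r - (-1 : ℂ) ^ r‖ ≤ C * jap x ^ (-s) * Wminus V (s + 1) x) ∧
      (∀ x : ℝ, x ≤ 1 →
        ‖deriv (fun x' => mp x' 0 ^ r) x‖ ≤ C * jap x ^ (-s) * Wminus V (s + 1) x) := by
  have hm := hmp.isZeroEnergyJost
  have hc := hm.tendsto_atBot_of_odd (integrable_jap_mul_abs hs hVint) hodd
  exact fun r _ _ => statement_19_general hVmeas.aestronglyMeasurable hs hVint hm hc r
end
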